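/- arXiv:math/0502331 — 5 statements merged into one kernel-verified Lean document; each statement's English description precedes it below -/
import Mathlib

section
/- The bialgebra A = O_q(M_n(k)) is coquasitriangular: there exists a k-bilinear form r : A × A → k which is convolution-invertible (i.e., there is a k-bilinear form r̄ : A × A → k with Σ_{(a),(b)} r(a₁,b₁)r̄(a₂,b₂) = Σ_{(a),(b)} r̄(a₁,b₁)r(a₂,b₂) = ε(a)ε(b) for all a,b ∈ A) and which satisfies, for all a,b,c ∈ A: (i) Σ_{(a),(b)} r(a₁,b₁)a₂b₂ = Σ_{(a),(b)} r(a₂,b₂)b₁a₁; (ii) r(ab,c) = Σ_{(c)} r(a,c₁)r(b,c₂); (iii) r(a,bc) = Σ_{(a)} r(a₁,c)r(a₂,b); (iv) r(a,1) = r(1,a) = ε(a); and whose values on generators are r(X_{ii},X_{ii}) = q for all i, r(X_{ii},X_{jj}) = 1 for i ≠ j, r(X_{ij},X_{ji}) = q̂ for i > j, and r(X_{ij},X_{lm}) = 0 in all other cases. -/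
open scoped TensorProduct
open scoped Classical

noncomputable section

namespace QMat

variable (k : Type*) [Field k] (n : ℕ) (q : k)

/-- Defining relations of the quantized coordinate ring `O_q(M_n(k))`. -/
inductive Rel : FreeAlgebra k (Fin n × Fin n) → FreeAlgebra k (Fin n × Fin n) → Prop
  | col {i l j : Fin n} (h : i < l) :
      Rel (FreeAlgebra.ι k (i, j) * FreeAlgebra.ι k (l, j))
        (q • (FreeAlgebra.ι k (l, j) * FreeAlgebra.ι k (i, j)))
  | row {i j m : Fin n} (h : j < m) :
      Rel (FreeAlgebra.ι k (i, j) * FreeAlgebra.ι k (i, m))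
        (q • (FreeAlgebra.ι k (i, m) * FreeAlgebra.ι k (i, j)))
  | swap {i j l m : Fin n} (h1 : i < l) (h2 : m < j) :
      Rel (FreeAlgebra.ι k (i, j) * FreeAlgebra.ι k (l, m))
        (FreeAlgebra.ι k (l, m) * FreeAlgebra.ι k (i, j))
  | mixed {i j l m : Fin n} (h1 : i < l) (h2 : j < m) :
      Rel (FreeAlgebra.ι k (i, j) * FreeAlgebra.ι k (l, m))
        (FreeAlgebra.ι k (l, m) * FreeAlgebra.ι k (i, j)
          + (q - q⁻¹) • (FreeAlgebra.ι k (i, m) * FreeAlgebra.ι k (l, j)))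

/-- The quantized coordinate ring `A = O_q(M_n(k))`. -/
abbrev A : Type _ := RingQuot (Rel k n q)

/-- The generator `X_{ij}` of `O_q(M_n(k))`. -/
def X (i j : Fin n) : A k n q :=
  RingQuot.mkAlgHom k (Rel k n q) (FreeAlgebra.ι k (i, j))

/-- The number of inversions `ℓ(σ)` of a permutation of `Fin t`. -/
def inversions {t : ℕ} (σ : Equiv.Perm (Fin t)) : ℕ :=
  (Finset.univ.filter fun p : Fin t × Fin t => p.1 < p.2 ∧ σ p.2 < σ p.1).card

/-- The quantum minor `[I|J]` (with junk value `0` when `|I| ≠ |J|`). -/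
def qMinor (I J : Finset (Fin n)) : A k n q :=
  if h : I.card = J.card then
    ∑ σ : Equiv.Perm (Fin I.card),
      ((-q) ^ inversions σ) •
        (List.ofFn fun l : Fin I.card =>
          X k n q (↑((I.orderIsoOfFin rfl) (σ l))) (↑((J.orderIsoOfFin h.symm) l))).prod
  else 0

/-- `ℓ(S;T) = #{(s,t) ∈ S×T : s > t}`. -/
def ell (S T : Finset (Fin n)) : ℕ :=
  ((S ×ˢ T).filter fun p => p.2 < p.1).card

/-- The `(-q)`-integer `[d]_{-q} = (-q)^{d-1} + (-q)^{d-3} + ⋯ + (-q)^{-(d-1)}`. -/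
def negqInt (d : ℕ) : k :=
  ∑ s ∈ Finset.range d, (-q) ^ ((d : ℤ) - 1 - 2 * (s : ℤ))

/-- `ξ_q(I;J) = [d₁]_{-q}⋯[d_m]_{-q}` where `d_l = |[1,r_l] ∩ J| - l + 1` for
`I = {r₁ < ⋯ < r_m}` (with junk value `1` when `|I| ≠ |J|`). -/
def xiq (I J : Finset (Fin n)) : k :=
  if _h : I.card = J.card then
    ∏ l : Fin I.card,
      negqInt k q
        ((J.filter fun x => x ≤ (↑((I.orderIsoOfFin rfl) l) : Fin n)).card - (l : ℕ))
  else 1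

/-- The componentwise order `I ≤ J` on index sets of the same cardinality:
writing `I = {i₁ < ⋯ < i_t}` and `J = {j₁ < ⋯ < j_t}`, we require `i_l ≤ j_l` for all `l`. -/
def setLE (I J : Finset (Fin n)) : Prop :=
  I.card = J.card ∧
    ∀ (h : I.card = J.card) (l : Fin I.card),
      (↑((I.orderIsoOfFin rfl) l) : Fin n) ≤ (↑((J.orderIsoOfFin h.symm) l) : Fin n)

/-- `S^♮ = (X ∩ Y) ⊔ ((X ∪ Y) ∖ S)` relative to the pair `(X, Y)`. -/
def snat (X Y S : Finset (Fin n)) : Finset (Fin n) :=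
  (X ∩ Y) ∪ ((X ∪ Y) \ S)

/-- `S_≤(X,Y) = {S ⊆ X ∪ Y : X ∩ Y ⊆ S, |S| = |X|, S ≤ X}`. -/
def sLE (X Y : Finset (Fin n)) : Finset (Finset (Fin n)) :=
  (X ∪ Y).powerset.filter fun S => X ∩ Y ⊆ S ∧ S.card = X.card ∧ setLE n S X

/-- `S_<(X,Y) = {S ⊆ X ∪ Y : X ∩ Y ⊆ S, |S| = |X|, S < X}`. -/
def sLT (X Y : Finset (Fin n)) : Finset (Finset (Fin n)) :=
  (sLE n X Y).filter fun S => S ≠ X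

/-- `S_≥(X,Y) = {T ⊆ X ∪ Y : X ∩ Y ⊆ T, |T| = |X|, T ≥ X}`. -/
def sGE (X Y : Finset (Fin n)) : Finset (Finset (Fin n)) :=
  (X ∪ Y).powerset.filter fun T => X ∩ Y ⊆ T ∧ T.card = X.card ∧ setLE n X T

/-- `S_>(X,Y) = {T ⊆ X ∪ Y : X ∩ Y ⊆ T, |T| = |X|, T > X}`. -/
def sGT (X Y : Finset (Fin n)) : Finset (Finset (Fin n)) :=
  (sGE n X Y).filter fun T => T ≠ X

/-- `L(S,X,Y) = ℓ((S∖S^♮)∪(Y∖X); X∖S) − ℓ((S∖S^♮)∪(Y∖X); S∖X)`. -/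
def Lfun (S X Y : Finset (Fin n)) : ℤ :=
  (ell n ((S \ snat n X Y S) ∪ (Y \ X)) (X \ S) : ℤ)
    - (ell n ((S \ snat n X Y S) ∪ (Y \ X)) (S \ X) : ℤ)

/-- `L^♮(T,X,Y) = ℓ((T^♮∖T)∪(X∖Y); T∖X) − ℓ((T^♮∖T)∪(X∖Y); X∖T)`. -/
def Lnat (T X Y : Finset (Fin n)) : ℤ :=
  (ell n ((snat n X Y T \ T) ∪ (X \ Y)) (T \ X) : ℤ)
    - (ell n ((snat n X Y T \ T) ∪ (X \ Y)) (X \ T) : ℤ)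

/-- The form `A ⊗ A → k` given on pure tensors by `x ⊗ y ↦ f(x) g(y)`. -/
def biform (f g : A k n q →ₗ[k] k) : (A k n q ⊗[k] A k n q) →ₗ[k] k :=
  (TensorProduct.lid k k).toLinearMap ∘ₗ TensorProduct.map f g

/-- Opposite multiplication `A ⊗ A → A`, `x ⊗ y ↦ y * x`. -/
def mulRev : (A k n q ⊗[k] A k n q) →ₗ[k] A k n q :=
  (LinearMap.mul' k (A k n q)) ∘ₗ (TensorProduct.comm k (A k n q) (A k n q)).toLinearMap

/-- `Σ (a₁ ⊗ b₁) ⊗ (a₂ ⊗ b₂)`, the regrouped double Sweedler decomposition of `a` and `b`. -/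
def sweedler2 (Δ : A k n q →ₐ[k] A k n q ⊗[k] A k n q) (a b : A k n q) :
    (A k n q ⊗[k] A k n q) ⊗[k] (A k n q ⊗[k] A k n q) :=
  (TensorProduct.tensorTensorTensorComm k (A k n q) (A k n q) (A k n q) (A k n q))
    (Δ a ⊗ₜ[k] Δ b)

/-- `Δ` is the standard comultiplication: `Δ(X_{ij}) = Σ_l X_{il} ⊗ X_{lj}`. -/
def IsComul (Δ : A k n q →ₐ[k] A k n q ⊗[k] A k n q) : Prop :=
  ∀ i j : Fin n, Δ (X k n q i j) = ∑ l : Fin n, X k n q i l ⊗ₜ[k] X k n q l j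

/-- `ε` is the standard counit: `ε(X_{ij}) = δ_{ij}`. -/
def IsCounit (ε : A k n q →ₐ[k] k) : Prop :=
  ∀ i j : Fin n, ε (X k n q i j) = if i = j then 1 else 0

/-- The bilinear form `r` satisfies the coquasitriangularity conditions (1.7)(i)-(iv)
together with the prescribed values (1.9) on the generators. -/
def IsRForm (Δ : A k n q →ₐ[k] A k n q ⊗[k] A k n q) (ε : A k n q →ₐ[k] k)
    (r : A k n q →ₗ[k] A k n q →ₗ[k] k) : Prop :=
  -- (i) `Σ r(a₁,b₁) a₂ b₂ = Σ r(a₂,b₂) b₁ a₁`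
  (∀ a b : A k n q,
      (TensorProduct.lid k (A k n q))
          ((TensorProduct.map (TensorProduct.lift r) (LinearMap.mul' k (A k n q)))
            (sweedler2 k n q Δ a b)) =
        (TensorProduct.rid k (A k n q))
          ((TensorProduct.map (mulRev k n q) (TensorProduct.lift r))
            (sweedler2 k n q Δ a b))) ∧
  -- (ii) `r(ab, c) = Σ r(a,c₁) r(b,c₂)`
  (∀ a b c : A k n q, r (a * b) c = biform k n q (r a) (r b) (Δ c)) ∧
  -- (iii) `r(a, bc) = Σ r(a₁,c) r(a₂,b)`
  (∀ a b c : A k n q, r a (b * c) = biform k n q (r.flip c) (r.flip b) (Δ a)) ∧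
  -- (iv) `r(a,1) = r(1,a) = ε(a)`
  (∀ a : A k n q, r a 1 = ε a ∧ r 1 a = ε a) ∧
  -- values on generators
  (∀ i j l m : Fin n,
      r (X k n q i j) (X k n q l m) =
        if i = j ∧ l = m ∧ i = l then q
        else if i = j ∧ l = m then 1
        else if l = j ∧ m = i ∧ j < i then q - q⁻¹
        else 0)

/-- `Σ f(a₁,b₁) g(a₂,b₂)`, the convolution-type pairing of two bilinear forms. -/
def convPair (Δ : A k n q →ₐ[k] A k n q ⊗[k] A k n q)
    (f g : A k n q →ₗ[k] A k n q →ₗ[k] k) (a b : A k n q) : k :=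
  (TensorProduct.lid k k)
    ((TensorProduct.map (TensorProduct.lift f) (TensorProduct.lift g))
      (sweedler2 k n q Δ a b))

end QMat

open QMat

/-!
The form is built from the R-matrix of type `A_{n-1}`, seen as the operator `S q` on families indexed
by two elements of `Fin n`:
`(S q F)(i,l) = (q if i = l, else 1) F(i,l) + [l < i] (q - q⁻¹) F(l,i)`.
It satisfies the Yang–Baxter equation (`S_yangBaxter`), `S q⁻¹` is its inverse (`S_inv`), and the
relations of `A = O_q(M_n(k))` are equivalent to the RTT relation `R X₁ X₂ = X₂ X₁ R` (`IsRTT`,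
`X_isRTT`, `liftRTT`).

**Construction of `r`.** If `r` exists, put `ρ_b(a) = Σ r(a₁,b) a₂`; then `r(a,b) = ε(ρ_b(a))`. So it
is enough to construct `ρ : A → End_k(A)`. The matrices `Y_{ij} ∈ M_n(A)` whose `(l,m)` entries are
the prescribed values of `ρ_{X_{lm}}(X_{ij})` satisfy RTT, by Yang–Baxter and RTT for `X`. Hence
there is an algebra map `P : A → M_n(A)` with `X_{ij} ↦ Y_{ij}`, whose entries are the operators
`ρ_{X_{lm}}`. These operators satisfy RTT in `End_k(A)` (`rg_isRTT`): the set of `a` at which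
the relation holds is a subalgebra, and it contains the generators by Yang–Baxter again. So
`X_{lm} ↦ ρ_{X_{lm}}` extends to an algebra map `ρ` (`rho`).

**The identities.** Each `ρ_b` satisfies `Δ ρ_b = (ρ_b ⊗ 1) Δ` (`rho_colinear`), so `ρ_b` is recovered
from `r(·,b)`; with `ρ_{bc} = ρ_b ρ_c` this is identity (iii). Identity (ii) follows from
`ρ_c(ab) = Σ ρ_{c₁}(a) ρ_{c₂}(b)` (`rho_mul_arg`). For identity (i), set `λ_b(a) = Σ a₁ r(a₂,b)` (`lam`).
The operators `λ_b` commute with the `ρ_c` and satisfy `λ_{bc} = λ_c λ_b`, and (i) becomes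
`Σ ρ_{b₁}(a) b₂ = Σ b₁ λ_{b₂}(a)` (`exchange`). This identity is multiplicative in `b`, and for
`b = X_{lm}` it is multiplicative in `a`, so it reduces to the RTT relation for the generators.

**The inverse.** The map `X_{ij} ↦ X_{ij}` extends to an anti-isomorphism `τ : O_q → O_{q⁻¹}`.
Transporting the `ρ` of `O_{q⁻¹}` along `τ` gives operators `ρ'_b` on `A`, and `S_inv` yields
`Σ ρ'_{b₂} ρ_{b₁} = ε(b) = Σ ρ_{b₂} ρ'_{b₁}` (`rho'_rho`, `rho_rho'`). Therefore
`r'(a,b) = ε(ρ'_b(a))` is the convolution inverse of `r`.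
-/

namespace QMat

/-! ### The R-matrix and the RTT relation -/
section Braid

variable {k : Type*} [Field k] {n : ℕ} {M N : Type*} [AddCommGroup M] [Module k M]
  [AddCommGroup N] [Module k N]

/-- The R-matrix as an operator on families `F` indexed by two elements of `Fin n`, with values in
any `k`-module: `(S q F)(i,l) = c F(i,l) + [l < i] (q - q⁻¹) F(l,i)`, where `c = q` if `i = l` and
`c = 1` otherwise. Acting on module-valued families avoids forming `n² × n²` matrices. -/
def S (q : k) (F : Fin n → Fin n → M) (i l : Fin n) : M :=
  (if i = l then q else 1) • F i l + if l < i then (q - q⁻¹) • F l i else 0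

/-- The operator `S q` is natural in the coefficient module. -/
theorem map_S (q : k) (f : M →ₗ[k] N) (F : Fin n → Fin n → M) (i l : Fin n) :
    f (S q F i l) = S q (fun x y => f (F x y)) i l := by
  unfold S
  split_ifs <;> simp

theorem sum_S {ι : Type*} (s : Finset ι) (q : k) (F : ι → Fin n → Fin n → M) (i l : Fin n) :
    ∑ t ∈ s, S q (F t) i l = S q (fun x y => ∑ t ∈ s, F t x y) i l := by
  unfold S
  split_ifs <;> simp [Finset.smul_sum, Finset.sum_add_distrib]

theorem S_add_smul (q a b : k) (F G : Fin n → Fin n → M) (i l : Fin n) :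
    S q (fun x y => a • F x y + b • G x y) i l = a • S q F i l + b • S q G i l := by
  unfold S
  split_ifs <;> module

theorem S_ite (q : k) (P : Prop) [Decidable P] (F : Fin n → Fin n → M) (i l : Fin n) :
    S q (fun x y => if P then F x y else 0) i l = if P then S q F i l else 0 := by
  by_cases h : P <;> simp [h, S]

/-- The Yang–Baxter equation `R₁₂ R₁₃ R₂₃ = R₂₃ R₁₃ R₁₂`, for families indexed by three elements of
`Fin n`. It is verified separately for each relative order of `i, l, u`. -/
theorem S_yangBaxter {q : k} (hq : q ≠ 0) (G : Fin n → Fin n → Fin n → M) (i l u : Fin n) :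
    S q (fun p s => S q (fun x w => S q (fun y v => G x y v) s w) p u) i l =
      S q (fun s w => S q (fun x v => S q (fun x' y' => G x' y' v) x s) i w) l u := by
  unfold S
  rcases lt_trichotomy i l with h1 | h1 | h1 <;>
  rcases lt_trichotomy l u with h2 | h2 | h2 <;>
  rcases lt_trichotomy i u with h3 | h3 | h3 <;>
  first
  | (exfalso; omega)
  | (first | subst h1 | skip
     first | subst h2 | skip
     first | subst h3 | skip
     simp [*, ne_of_lt, ne_of_gt, not_lt_of_gt]
     try (match_scalars <;> field_simp <;> ring))

/-- The operator `S q⁻¹` is a right inverse of `S q`. -/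
theorem S_inv {p q : k} (h : q * p = 1) (F : Fin n → Fin n → M) (i l : Fin n) :
    S q (fun x w => S p F x w) i l = F i l := by
  have hq : q ≠ 0 := left_ne_zero_of_mul_eq_one h
  obtain rfl : p = q⁻¹ := eq_inv_of_mul_eq_one_right h
  unfold S
  rcases lt_trichotomy i l with h1 | h1 | h1
  · simp [h1.ne, h1.not_gt]
  · subst h1
    simp [smul_smul, hq]
  · simp only [h1.ne', h1, h1.not_gt, h1.ne, if_true, if_false]
    match_scalars <;> field_simp
    ring

/-- `S q` applied to the delta function at `(j,m)`, i.e. the column of the R-matrix indexed by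
`(j,m)`. -/
theorem S_delta (q : k) (w w' j m : Fin n) (z : M) :
    S q (fun a b => if a = j ∧ b = m then z else 0) w w' =
      (if j = m then q else 1) • (if w = j ∧ w' = m then z else 0) +
        (if j < m then q - q⁻¹ else 0) • (if w = m ∧ w' = j then z else 0) := by
  unfold S
  by_cases h1 : w = j ∧ w' = m
  · obtain ⟨rfl, rfl⟩ := h1
    by_cases h : w = w'
    · subst h; simp
    · simp [h, Ne.symm h]
  · by_cases h2 : w = m ∧ w' = j
    · obtain ⟨rfl, rfl⟩ := h2
      simp [h1]
    · have h3 : ¬ (w' = j ∧ w = m) := fun h => h2 ⟨h.2, h.1⟩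
      simp [h1, h2, h3]

variable {B : Type*} [Ring B] [Algebra k B]

/-- The RTT relation `R Y₁ Y₂ = Y₂ Y₁ R` for a matrix `Y` over an algebra, entry by entry. -/
def IsRTT (q : k) (Y : Fin n → Fin n → B) : Prop :=
  ∀ i l j m : Fin n, S q (fun p s => Y p j * Y s m) i l =
    (if j = m then q else 1) • (Y l m * Y i j) +
      (if j < m then q - q⁻¹ else 0) • (Y l j * Y i m)

/-- The algebra map `O_q(M_n(k)) → B`, `X_{ij} ↦ Y_{ij}`, for a matrix `Y` whose entries satisfy the
defining relations. -/
def liftRel (q : k) (Y : Fin n → Fin n → B)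
    (hcol : ∀ i l j, i < l → Y i j * Y l j = q • (Y l j * Y i j))
    (hrow : ∀ i j m, j < m → Y i j * Y i m = q • (Y i m * Y i j))
    (hswap : ∀ i j l m, i < l → m < j → Y i j * Y l m = Y l m * Y i j)
    (hmixed : ∀ i j l m, i < l → j < m →
      Y i j * Y l m = Y l m * Y i j + (q - q⁻¹) • (Y i m * Y l j)) :
    A k n q →ₐ[k] B :=
  RingQuot.liftAlgHom k ⟨FreeAlgebra.lift k fun p => Y p.1 p.2, by
    intro x y h
    induction h with
    | col h => simpa using hcol _ _ _ h
    | row h => simpa using hrow _ _ _ h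
    | swap h1 h2 => simpa using hswap _ _ _ _ h1 h2
    | mixed h1 h2 => simpa using hmixed _ _ _ _ h1 h2⟩

theorem liftRel_X (q : k) (Y : Fin n → Fin n → B) (h1 h2 h3 h4) (i j : Fin n) :
    liftRel q Y h1 h2 h3 h4 (X k n q i j) = Y i j := by
  simp [liftRel, X]

/-- The algebra map `O_q(M_n(k)) → B`, `X_{ij} ↦ Y_{ij}`, for a matrix `Y` satisfying the RTT
relation; each defining relation is read off from suitable entries of RTT. -/
def liftRTT {q : k} (Y : Fin n → Fin n → B) (h : IsRTT q Y) : A k n q →ₐ[k] B :=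
  liftRel q Y
    (fun i l j hl => by simpa [S, hl.ne, hl.not_gt] using h i l j j)
    (fun i j m hj => by
      have h := h i i m j
      simp only [S, if_true, hj.ne', hj.not_gt, lt_irrefl, if_false, add_zero, one_smul, zero_smul] at h
      exact h.symm)
    (fun i j l m hi hm => by
      simpa [S, hi.ne, hi.not_gt, hm.ne', hm.not_gt] using h i l j m)
    (fun i j l m hi hj => by
      have h1 := h i l j m
      have h2 := h i l m j
      simp only [S, hi.ne, hi.not_gt, hj.ne, hj.ne', hj, hj.not_gt, if_true, if_false, add_zero,
        one_smul, zero_smul] at h1 h2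
      rw [h1, h2])

theorem liftRTT_X {q : k} (Y : Fin n → Fin n → B) (h : IsRTT q Y) (i j : Fin n) :
    liftRTT Y h (X k n q i j) = Y i j := liftRel_X ..

end Braid

/-! ### Presentation of `A`, and the operators `ρ_b` -/
section Gen

variable {k : Type*} [Field k] {n : ℕ} {q : k}

theorem X_col {i l : Fin n} (j : Fin n) (h : i < l) :
    X k n q i j * X k n q l j = q • (X k n q l j * X k n q i j) := by
  simpa [X] using RingQuot.mkAlgHom_rel k (Rel.col (q := q) (j := j) h)

theorem X_row (i : Fin n) {j m : Fin n} (h : j < m) :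
    X k n q i j * X k n q i m = q • (X k n q i m * X k n q i j) := by
  simpa [X] using RingQuot.mkAlgHom_rel k (Rel.row (q := q) (i := i) h)

theorem X_swap {i j l m : Fin n} (h1 : i < l) (h2 : m < j) :
    X k n q i j * X k n q l m = X k n q l m * X k n q i j := by
  simpa [X] using RingQuot.mkAlgHom_rel k (Rel.swap (q := q) h1 h2)

theorem X_mixed {i j l m : Fin n} (h1 : i < l) (h2 : j < m) :
    X k n q i j * X k n q l m =
      X k n q l m * X k n q i j + (q - q⁻¹) • (X k n q i m * X k n q l j) := by
  simpa [X] using RingQuot.mkAlgHom_rel k (Rel.mixed (q := q) h1 h2)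

/-- The defining relations imply the RTT relation for the generators. -/
theorem X_isRTT (hq : q ≠ 0) : IsRTT q (X k n q) := by
  intro i l j m
  unfold S
  rcases lt_trichotomy i l with h1 | h1 | h1
  · simp only [h1.ne, h1.not_gt, if_false, add_zero, one_smul]
    rcases lt_trichotomy j m with h2 | h2 | h2
    · simp only [h2.ne, h2, if_true, if_false, one_smul]
      rw [X_mixed h1 h2, X_swap h1 h2]
    · subst h2
      simp [X_col j h1]
    · simp [h2.ne', h2.not_gt, X_swap h1 h2]
  · subst h1
    rcases lt_trichotomy j m with h2 | h2 | h2
    · simp only [h2.ne, h2, lt_irrefl, if_true, if_false, one_smul]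
      rw [X_row i h2]
      match_scalars; field_simp; ring
    · subst h2
      simp
    · simp [h2.ne', h2.not_gt, X_row i h2]
  · simp only [h1.ne', h1, if_true, if_false, one_smul]
    rcases lt_trichotomy j m with h2 | h2 | h2
    · simp [h2.ne, h2, X_swap h1 h2]
    · subst h2
      simp only [lt_irrefl, if_true, if_false]
      rw [X_col j h1]
      match_scalars; field_simp; ring
    · simp only [h2.ne', h2.not_gt, if_false, one_smul, zero_smul, add_zero]
      rw [X_mixed h1 h2]

/-- Induction over `A` from its generators. -/
@[elab_as_elim]
theorem A_induction {C : A k n q → Prop} (a : A k n q)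
    (one : C 1) (X : ∀ i j, C (X k n q i j)) (mul : ∀ a b, C a → C b → C (a * b))
    (add : ∀ a b, C a → C b → C (a + b)) (smul : ∀ (t : k) a, C a → C (t • a)) : C a := by
  obtain ⟨x, rfl⟩ := RingQuot.mkAlgHom_surjective k (Rel k n q) a
  induction x using FreeAlgebra.induction with
  | grade0 t =>
    rw [AlgHom.commutes, Algebra.algebraMap_eq_smul_one]
    exact smul _ _ one
  | grade1 p => exact X p.1 p.2
  | mul a b ha hb => rw [map_mul]; exact mul _ _ ha hb
  | add a b ha hb => rw [map_add]; exact add _ _ ha hb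

/-- The matrix `Y_{ij} ∈ M_n(A)` whose `(u,w)` entry is `ρ_{X_{uw}}(X_{ij})`, namely
`Σ_x r(X_{ix},X_{uw}) X_{xj}` with the prescribed values of `r`, written through the operator `S`. -/
def Ymat (q : k) (i j : Fin n) : Matrix (Fin n) (Fin n) (A k n q) :=
  Matrix.of fun u w => S q (fun x w' => if w' = w then X k n q x j else 0) i u

theorem Ymat_apply (i j u w : Fin n) :
    Ymat q i j u w = S q (fun x w' => if w' = w then X k n q x j else 0) i u := rfl

theorem Ymat_mul_apply (p j u v : Fin n) (Z : Matrix (Fin n) (Fin n) (A k n q)) :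
    (Ymat q p j * Z) u v = S q (fun x w => X k n q x j * Z w v) p u := by
  have h (w : Fin n) : Ymat q p j u w * Z w v =
      S q (fun x w' => (if w' = w then X k n q x j else 0) * Z w v) p u :=
    map_S q (LinearMap.mulRight k (Z w v)) (fun x w' => if w' = w then X k n q x j else 0) p u
  simp [Matrix.mul_apply, h, sum_S]

/-- The matrices `Y_{ij}` satisfy the RTT relation over `M_n(A)`: the entries of `Y_{pj} Y_{sm}` are
two applications of `S` to `X_{xj} X_{ym}`, and Yang–Baxter moves the third application inside,
where RTT for the generators applies. -/
theorem Ymat_isRTT (hq : q ≠ 0) : IsRTT q (Ymat (k := k) (n := n) q) := by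
  intro i l j m
  ext u v
  have key (p s j m : Fin n) : (Ymat q p j * Ymat q s m) u v =
      S q (fun x w => S q (fun y v' =>
        if v' = v then X k n q x j * X k n q y m else 0) s w) p u := by
    rw [Ymat_mul_apply]
    congr 1; ext x w
    refine (map_S q (LinearMap.mulLeft k (X k n q x j))
      (fun y v' => if v' = v then X k n q y m else 0) s w).trans ?_
    simp
  have h1 : S q (fun p s => Ymat q p j * Ymat q s m) i l u v =
      S q (fun p s => (Ymat q p j * Ymat q s m) u v) i l :=
    map_S q (Matrix.entryLinearMap k (A k n q) u v)
      (fun p s => Ymat q p j * Ymat q s m) i l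
  have h2 (x s v' : Fin n) : S q (fun x' y' =>
      if v' = v then X k n q x' j * X k n q y' m else 0) x s =
      (if j = m then q else 1) • (if v' = v then X k n q s m * X k n q x j else 0) +
      (if j < m then q - q⁻¹ else 0) • (if v' = v then X k n q s j * X k n q x m else 0) := by
    rw [S_ite, X_isRTT hq x s j m]
    by_cases hv : v' = v <;> simp [hv]
  rw [h1, Matrix.add_apply, Matrix.smul_apply, Matrix.smul_apply, key, key]
  simp only [key, S_yangBaxter hq, h2, S_add_smul]

/-- The algebra map `A → M_n(A)`, `X_{ij} ↦ Y_{ij}`. -/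
def P (hq : q ≠ 0) : A k n q →ₐ[k] Matrix (Fin n) (Fin n) (A k n q) :=
  liftRTT (Ymat q) (Ymat_isRTT hq)

/-- The operator `ρ_{X_{lm}}` on `A`, defined as the `(l,m)` entry of `P`. -/
def rg (hq : q ≠ 0) (l m : Fin n) : Module.End k (A k n q) :=
  Matrix.entryLinearMap k (A k n q) l m ∘ₗ (P hq).toLinearMap

theorem rg_apply (hq : q ≠ 0) (l m : Fin n) (a : A k n q) : rg hq l m a = P hq a l m := rfl

theorem rg_X (hq : q ≠ 0) (i j l m : Fin n) :
    rg hq l m (X k n q i j) = S q (fun x w => if w = m then X k n q x j else 0) i l := by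
  rw [rg_apply, P, liftRTT_X, Ymat_apply]

theorem rg_one (hq : q ≠ 0) (l m : Fin n) : rg (n := n) hq l m 1 = if l = m then 1 else 0 := by
  rw [rg_apply, map_one, Matrix.one_apply]

theorem rg_mul (hq : q ≠ 0) (l m : Fin n) (a b : A k n q) :
    rg hq l m (a * b) = ∑ s, rg hq l s a * rg hq s m b := by
  simp only [rg_apply, map_mul, Matrix.mul_apply]

/-- Moving the R-matrix across a product: `Σ (G R) F = Σ G (R F)`, where the action of `R` from the
right is written out on the left-hand side. -/
theorem sum_mul_S (q : k) (G F : Fin n → Fin n → A k n q) :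
    ∑ u, ∑ t, ((if u = t then q else 1) • G u t + (if u < t then q - q⁻¹ else 0) • G t u) * F u t =
      ∑ u, ∑ t, G u t * S q F u t := by
  simp only [S, add_mul, mul_add, Finset.sum_add_distrib, smul_mul_assoc, mul_smul_comm]
  congr 1
  rw [Finset.sum_comm]
  refine Finset.sum_congr rfl fun u _ => Finset.sum_congr rfl fun t _ => ?_
  split_ifs <;> simp

/-- The operators `ρ_{X_{lm}}` satisfy the RTT relation in `End_k(A)`. Evaluated at a generator this
is the Yang–Baxter equation, and the relation is preserved under products of arguments. -/
theorem rg_isRTT (hq : q ≠ 0) : IsRTT q (rg (k := k) (n := n) hq) := by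
  have hU (i l j m : Fin n) (a b : A k n q) : rg hq i j (rg hq l m (a * b)) =
      ∑ u, ∑ t, rg hq i u (rg hq l t a) * rg hq u j (rg hq t m b) := by
    rw [rg_mul, map_sum, Finset.sum_comm]
    simp only [rg_mul]
  have main (a : A k n q) : ∀ i l j m : Fin n,
      S q (fun p s => rg hq p j (rg hq s m a)) i l =
        (if j = m then q else 1) • rg hq l m (rg hq i j a) +
          (if j < m then q - q⁻¹ else 0) • rg hq l j (rg hq i m a) := by
    induction a using A_induction with
    | one =>
      intro i l j m
      have h (i l j m : Fin n) : rg hq i j (rg (q := q) hq l m 1) =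
          if i = j ∧ l = m then 1 else 0 := by
        rw [rg_one]
        by_cases h : l = m <;> simp [h, rg_one]
      simp only [h, S_delta, and_comm]
    | X x y =>
      intro i l j m
      have h (i l j m : Fin n) : rg hq i j (rg hq l m (X k n q x y)) =
          S q (fun p w => S q (fun p' w' => if w' = j ∧ w = m then X k n q p' y else 0) p i)
            x l := by
        rw [rg_X, map_S]
        congr 1; ext p w
        by_cases h : w = m <;> simp [h, rg_X, S]
      simp only [h]
      rw [← S_yangBaxter hq]
      simp only [S_delta, S_add_smul, and_comm]
    | mul a b ha hb =>
      intro i l j m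
      -- With `U(a) = (ρ_{X_{ij}} ρ_{X_{lm}} a)` and `V(a) = (ρ_{X_{lm}} ρ_{X_{ij}} a)`, both
      -- multiplicative in `a`: `R U(a) U(b) = V(a) R U(b) = V(a) V(b) R`.
      have h1 (u t : Fin n) := map_S q (LinearMap.mulRight k (rg hq u j (rg hq t m b)))
        (fun p s => rg hq p u (rg hq s t a)) i l
      simp only [LinearMap.mulRight_apply] at h1
      simp only [hU, ← sum_S, ← h1, ha]
      rw [sum_mul_S q (fun u t => rg hq l t (rg hq i u a))
        (fun u t => rg hq u j (rg hq t m b))]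
      simp only [hb]
      rw [Finset.sum_comm (f := fun t u => rg hq l t (rg hq i u a) * rg hq t m (rg hq u j b)),
        Finset.sum_comm (f := fun t u => rg hq l t (rg hq i u a) * rg hq t j (rg hq u m b))]
      simp only [Finset.smul_sum, ← Finset.sum_add_distrib, mul_add, mul_smul_comm]
    | add a b ha hb =>
      intro i l j m
      simp only [map_add, smul_add]
      have := S_add_smul q 1 1 (fun p s => rg hq p j (rg hq s m a))
        (fun p s => rg hq p j (rg hq s m b)) i l
      simp only [one_smul] at this
      rw [this, ha, hb]
      abel
    | smul t a ha =>
      intro i l j m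
      have := S_add_smul q t 0 (fun p s => rg hq p j (rg hq s m a)) 0 i l
      simp only [zero_smul, add_zero] at this
      simp only [map_smul]
      rw [this, ha]
      module
  intro i l j m
  ext a
  exact (map_S q (LinearMap.applyₗ a) (fun p s => rg hq p j * rg hq s m) i l).trans (main a i l j m)

/-- The algebra map `ρ : A → End_k(A)`, which for `r(a,b) = ε(ρ_b(a))` will satisfy
`ρ_b(a) = Σ r(a₁,b) a₂`. -/
def rho (hq : q ≠ 0) : A k n q →ₐ[k] Module.End k (A k n q) := liftRTT (rg hq) (rg_isRTT hq)

theorem rho_X (hq : q ≠ 0) (i j : Fin n) : rho hq (X k n q i j) = rg hq i j := liftRTT_X ..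

end Gen

/-! ### The inverse operators `ρ'_b` -/
section Flip
variable {k : Type*} [Field k] {n : ℕ} {p q : k}

/-- The algebra map `O_q(M_n(k)) → O_p(M_n(k))ᵒᵖ`, `X_{ij} ↦ X_{ij}`, for `p = q⁻¹`. The parameter
`p` is kept free, subject to `q * p = 1`, so that the same definition gives the map in both
directions without rewriting `q⁻¹⁻¹`. -/
def tau (h : q * p = 1) : A k n q →ₐ[k] (A k n p)ᵐᵒᵖ :=
  have hq : q ≠ 0 := left_ne_zero_of_mul_eq_one h
  have hp : p = q⁻¹ := eq_inv_of_mul_eq_one_right h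
  liftRel q (fun i j => MulOpposite.op (X k n p i j))
    (fun i l j hl => by
      rw [← MulOpposite.op_mul, ← MulOpposite.op_mul, ← MulOpposite.op_smul, X_col j hl, smul_smul,
        h, one_smul])
    (fun i j m hj => by
      rw [← MulOpposite.op_mul, ← MulOpposite.op_mul, ← MulOpposite.op_smul, X_row i hj, smul_smul,
        h, one_smul])
    (fun i j l m hi hm => by
      rw [← MulOpposite.op_mul, ← MulOpposite.op_mul, X_swap hi hm])
    (fun i j l m hi hj => by
      rw [← MulOpposite.op_mul, ← MulOpposite.op_mul, ← MulOpposite.op_mul, ← MulOpposite.op_smul,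
        ← MulOpposite.op_add, X_mixed hi hj, X_swap hi hj, hp, inv_inv]
      congr 1
      module)

/-- The linear, multiplication-reversing map `O_q → O_p` underlying `tau`. -/
def tauL (h : q * p = 1) : A k n q →ₗ[k] A k n p :=
  (MulOpposite.opLinearEquiv k).symm.toLinearMap ∘ₗ (tau h).toLinearMap

theorem tauL_X (h : q * p = 1) (i j : Fin n) : tauL h (X k n q i j) = X k n p i j := by
  simp [tauL, tau, liftRel_X]

theorem tauL_one (h : q * p = 1) : tauL (n := n) h 1 = 1 := by
  simp [tauL]

theorem tauL_mul (h : q * p = 1) (a b : A k n q) : tauL h (a * b) = tauL h b * tauL h a := by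
  simp [tauL]

theorem tauL_tauL (h : q * p = 1) (h' : p * q = 1) (a : A k n q) : tauL h' (tauL h a) = a := by
  induction a using A_induction with
  | one => simp [tauL_one]
  | X i j => simp [tauL_X]
  | mul a b ha hb => simp [tauL_mul, ha, hb]
  | add a b ha hb => simp [ha, hb]
  | smul t a ha => simp [ha]

/-- The operators `ρ'_b = τ⁻¹ ∘ ρ_{τ b} ∘ τ`, where `ρ` is taken for `O_{q⁻¹}(M_n(k))` and `τ` is the
anti-isomorphism `tauL` from `O_q` to `O_{q⁻¹}`. -/
def rho' (hq : q ≠ 0) : A k n q →ₗ[k] Module.End k (A k n q) :=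
  LinearMap.mk₂ k (fun b a => tauL (inv_mul_cancel₀ hq)
      (rho (inv_ne_zero hq) (tauL (mul_inv_cancel₀ hq) b) (tauL (mul_inv_cancel₀ hq) a)))
    (by simp) (by simp) (by simp) (by simp)

theorem rho'_apply (hq : q ≠ 0) (b a : A k n q) : rho' hq b a = tauL (inv_mul_cancel₀ hq)
      (rho (inv_ne_zero hq) (tauL (mul_inv_cancel₀ hq) b) (tauL (mul_inv_cancel₀ hq) a)) := rfl

theorem rho'_one (hq : q ≠ 0) (a : A k n q) : rho' hq 1 a = a := by
  simp [rho'_apply, tauL_one, tauL_tauL]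

theorem rho'_mul (hq : q ≠ 0) (b c a : A k n q) : rho' hq (b * c) a = rho' hq c (rho' hq b a) := by
  simp [rho'_apply, tauL_mul, tauL_tauL]

theorem rho'_X_X (hq : q ≠ 0) (i j l m : Fin n) : rho' hq (X k n q l m) (X k n q i j) =
    S q⁻¹ (fun x w => if w = m then X k n q x j else 0) i l := by
  rw [rho'_apply, tauL_X, tauL_X, rho_X, rg_X, map_S]
  simp only [apply_ite, map_zero, tauL_X]

theorem rho'_X_one (hq : q ≠ 0) (l m : Fin n) :
    rho' hq (X k n q l m) 1 = if l = m then 1 else 0 := by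
  rw [rho'_apply, tauL_X, tauL_one, rho_X, rg_one]
  split_ifs <;> simp [tauL_one]

theorem rho'_X_mul (hq : q ≠ 0) (l m : Fin n) (a b : A k n q) : rho' hq (X k n q l m) (a * b) =
    ∑ s, rho' hq (X k n q s m) a * rho' hq (X k n q l s) b := by
  simp only [rho'_apply, tauL_X, rho_X, tauL_mul, rg_mul, map_sum]

/-- The relation `Σ ρ'_{b₂} ρ_{b₁} = ε(b)` for `b = X_{lm}`. -/
theorem rho'_rg (hq : q ≠ 0) (l m : Fin n) (a : A k n q) :
    ∑ s, rho' hq (X k n q s m) (rg hq l s a) = if l = m then a else 0 := by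
  induction a using A_induction generalizing l m with
  | one =>
    simp [rg_one, apply_ite, rho'_X_one]
    split_ifs with h <;> simp [h]
  | X i j =>
    simp only [rg_X, map_S, sum_S]
    have h (x w : Fin n) :
        ∑ t, rho' hq (X k n q t m) (if w = t then X k n q x j else 0) =
          S q⁻¹ (fun y v => if v = m then X k n q y j else 0) x w := by
      simp [apply_ite, rho'_X_X]
    simp only [h, S_inv (mul_inv_cancel₀ hq)]
  | mul a b ha hb =>
    have h (u t : Fin n) : ∑ s, rho' hq (X k n q t m) (rg hq l u a) *
        rho' hq (X k n q s t) (rg hq u s b) =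
        rho' hq (X k n q t m) (rg hq l u a) * if u = t then b else 0 := by
      rw [← Finset.mul_sum, hb]
    simp only [rg_mul, map_sum, rho'_X_mul]
    calc _ = ∑ u, ∑ t, ∑ s, rho' hq (X k n q t m) (rg hq l u a) *
        rho' hq (X k n q s t) (rg hq u s b) := by
          rw [Finset.sum_comm]
          exact Finset.sum_congr rfl fun u _ => Finset.sum_comm
      _ = (∑ u, rho' hq (X k n q u m) (rg hq l u a)) * b := by
          simp [h, Finset.sum_mul]
      _ = _ := by rw [ha]; split_ifs <;> simp
  | add a b ha hb =>
    simp only [map_add, Finset.sum_add_distrib, ha, hb]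
    split_ifs <;> simp
  | smul t a ha =>
    simp only [map_smul, ← Finset.smul_sum, ha]
    split_ifs <;> simp

/-- The relation `Σ ρ_{b₂} ρ'_{b₁} = ε(b)` for `b = X_{lm}`. -/
theorem rg_rho' (hq : q ≠ 0) (l m : Fin n) (a : A k n q) :
    ∑ s, rg hq s m (rho' hq (X k n q l s) a) = if l = m then a else 0 := by
  induction a using A_induction generalizing l m with
  | one =>
    simp [rg_one, apply_ite, rho'_X_one]
    split_ifs with h <;> simp [h]
  | X i j =>
    simp only [rho'_X_X, map_S, sum_S]
    have h (x w : Fin n) :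
        ∑ t, rg hq t m (if w = t then X k n q x j else 0) =
          S q (fun y v => if v = m then X k n q y j else 0) x w := by
      simp [apply_ite, rg_X]
    simp only [h, S_inv (inv_mul_cancel₀ hq)]
  | mul a b ha hb =>
    have h (u t : Fin n) : ∑ s, rg hq s t (rho' hq (X k n q u s) a) *
        rg hq t m (rho' hq (X k n q l u) b) =
        (if u = t then a else 0) * rg hq t m (rho' hq (X k n q l u) b) := by
      rw [← Finset.sum_mul, ha]
    simp only [rg_mul, map_sum, rho'_X_mul]
    calc _ = ∑ u, ∑ t, ∑ s, rg hq s t (rho' hq (X k n q u s) a) *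
        rg hq t m (rho' hq (X k n q l u) b) := by
          rw [Finset.sum_comm]
          exact Finset.sum_congr rfl fun u _ => Finset.sum_comm
      _ = a * (∑ u, rg hq u m (rho' hq (X k n q l u) b)) := by
          simp [h, Finset.mul_sum]
      _ = _ := by rw [hb]; split_ifs <;> simp
  | add a b ha hb =>
    simp only [map_add, Finset.sum_add_distrib, ha, hb]
    split_ifs <;> simp
  | smul t a ha =>
    simp only [map_smul, ← Finset.smul_sum, ha]
    split_ifs <;> simp

end Flip

/-! ### Compatibility with the coalgebra structure -/
section Co
variable {k : Type*} [Field k] {n : ℕ} {q : k}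
  {Δ : A k n q →ₐ[k] A k n q ⊗[k] A k n q} {ε : A k n q →ₐ[k] k}

theorem A_hom_ext {B : Type*} [Semiring B] [Algebra k B] {f g : A k n q →ₐ[k] B}
    (h : ∀ i j, f (X k n q i j) = g (X k n q i j)) : f = g := by
  refine AlgHom.ext fun a => ?_
  induction a using A_induction with
  | one => simp
  | X i j => exact h i j
  | mul a b ha hb => simp [ha, hb]
  | add a b ha hb => simp [ha, hb]
  | smul t a ha => simp [ha]

theorem counit_left (hΔ : IsComul k n q Δ) (hε : IsCounit k n q ε) (a : A k n q) :
    TensorProduct.lid k _ (ε.toLinearMap.rTensor (A k n q) (Δ a)) = a := by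
  have h : ((Algebra.TensorProduct.lid k (A k n q)).toAlgHom.comp
      (Algebra.TensorProduct.map ε (AlgHom.id k _))).comp Δ = AlgHom.id k _ := by
    refine A_hom_ext fun i j => ?_
    simp [hΔ i j, hε _ _]
  exact DFunLike.congr_fun h a

theorem counit_right (hΔ : IsComul k n q Δ) (hε : IsCounit k n q ε) (a : A k n q) :
    TensorProduct.rid k _ (ε.toLinearMap.lTensor (A k n q) (Δ a)) = a := by
  have h : ((Algebra.TensorProduct.rid k k (A k n q)).toAlgHom.comp
      (Algebra.TensorProduct.map (AlgHom.id k _) ε)).comp Δ = AlgHom.id k _ := by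
    refine A_hom_ext fun i j => ?_
    simp [hΔ i j, hε _ _]
  exact DFunLike.congr_fun h a

theorem coassoc (hΔ : IsComul k n q Δ) (a : A k n q) :
    TensorProduct.assoc k _ _ _ (Δ.toLinearMap.rTensor (A k n q) (Δ a)) =
      Δ.toLinearMap.lTensor (A k n q) (Δ a) := by
  have h : ((Algebra.TensorProduct.assoc k k k (A k n q) (A k n q) (A k n q)).toAlgHom.comp
      (Algebra.TensorProduct.map Δ (AlgHom.id k _))).comp Δ =
      (Algebra.TensorProduct.map (AlgHom.id k _) Δ).comp Δ := by
    refine A_hom_ext fun i j => ?_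
    simp [hΔ _ _, TensorProduct.sum_tmul, TensorProduct.tmul_sum]
    exact Finset.sum_comm
  exact DFunLike.congr_fun h a

/-- A matrix `f` of operators on `A` that is multiplicative (`f_{lm}(ab) = Σ_s f_{ls}(a) f_{sm}(b)`)
and of the form `f_{lm}(X_{ij}) = Σ_x c_x X_{xj}` on generators consists of right comodule maps,
`Δ ∘ f_{lm} = (f_{lm} ⊗ 1) ∘ Δ`. -/
theorem colinear_of_gen (hΔ : IsComul k n q Δ) (f : Fin n → Fin n → Module.End k (A k n q))
    (h1 : ∀ l m, f l m 1 = if l = m then 1 else 0)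
    (hmul : ∀ l m a b, f l m (a * b) = ∑ s, f l s a * f s m b)
    (c : Fin n → Fin n → Fin n → Fin n → k)
    (hX : ∀ i j l m, f l m (X k n q i j) = ∑ x, c i l m x • X k n q x j)
    (l m : Fin n) (a : A k n q) : Δ (f l m a) = (f l m).rTensor (A k n q) (Δ a) := by
  induction a using A_induction generalizing l m with
  | one =>
    rw [h1, map_one, Algebra.TensorProduct.one_def, LinearMap.rTensor_tmul, h1]
    split_ifs <;> simp [Algebra.TensorProduct.one_def]
  | X i j =>
    simp only [hX, map_sum, map_smul, hΔ _ _, LinearMap.rTensor_tmul, TensorProduct.sum_tmul,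
      Finset.smul_sum, TensorProduct.smul_tmul']
    exact Finset.sum_comm
  | mul a b ha hb =>
    have h (z w : A k n q ⊗[k] A k n q) : (f l m).rTensor (A k n q) (z * w) =
        ∑ s, (f l s).rTensor (A k n q) z * (f s m).rTensor (A k n q) w := by
      induction z with
      | zero => simp
      | add x y hx hy => simp [add_mul, hx, hy, Finset.sum_add_distrib]
      | tmul x y =>
        induction w with
        | zero => simp
        | add x y hx hy => simp [mul_add, hx, hy, Finset.sum_add_distrib]
        | tmul x' y' => simp [hmul, TensorProduct.sum_tmul]
    simp only [hmul, map_sum, map_mul, ha, hb, h]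
  | add a b ha hb => simp only [map_add, ha, hb]
  | smul t a ha => simp only [map_smul, ha]

/-- Expansion of `S p`, applied as in `Ymat`, as a `k`-linear combination of the generators
`X_{xj}` of the `j`-th column. -/
theorem S_eq_sum (p : k) (i l m j : Fin n) :
    S p (fun x w => if w = m then X k n q x j else 0) i l =
      ∑ x, S p (fun x' w => if w = m ∧ x' = x then (1 : k) else 0) i l • X k n q x j := by
  have h (x : Fin n) := map_S p (LinearMap.toSpanSingleton k _ (X k n q x j))
    (fun x' w => if w = m ∧ x' = x then (1 : k) else 0) i l
  simp only [LinearMap.toSpanSingleton_apply] at h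
  simp only [h, sum_S]
  congr 1; ext x w
  by_cases hw : w = m <;> simp [hw]

theorem rho_colinear (hq : q ≠ 0) (hΔ : IsComul k n q Δ) (b a : A k n q) :
    Δ (rho hq b a) = (rho hq b).rTensor (A k n q) (Δ a) := by
  induction b using A_induction generalizing a with
  | one => simp [Module.End.one_eq_id]
  | X l m =>
    rw [rho_X]
    exact colinear_of_gen hΔ (rg hq) (rg_one hq) (rg_mul hq) _
      (fun i j l m => (rg_X hq i j l m).trans (S_eq_sum q i l m j)) l m a
  | mul b c hb hc =>
    rw [map_mul, Module.End.mul_apply, hb, hc, LinearMap.rTensor_mul, Module.End.mul_apply]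
  | add b c hb hc => simp [hb, hc, LinearMap.rTensor_add]
  | smul t b hb => simp [hb, LinearMap.rTensor_smul]

theorem rho'_colinear (hq : q ≠ 0) (hΔ : IsComul k n q Δ) (b a : A k n q) :
    Δ (rho' hq b a) = (rho' hq b).rTensor (A k n q) (Δ a) := by
  induction b using A_induction generalizing a with
  | one =>
    have h : rho' hq 1 = LinearMap.id (R := k) (M := A k n q) := LinearMap.ext (rho'_one hq)
    simp [h]
  | X l m =>
    exact colinear_of_gen hΔ (fun m l => rho' hq (X k n q l m))
      (fun l m => by rw [rho'_X_one]; simp only [eq_comm]) (fun l m a b => rho'_X_mul hq m l a b)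
      (fun i l m x => S q⁻¹ (fun x' w => if w = l ∧ x' = x then (1 : k) else 0) i m)
      (fun i j l m => (rho'_X_X hq i j m l).trans (S_eq_sum q⁻¹ i m l j)) m l a
  | mul b c hb hc =>
    have h : rho' hq (b * c) = rho' hq c * rho' hq b := LinearMap.ext (rho'_mul hq b c)
    rw [h, Module.End.mul_apply, hc, hb, LinearMap.rTensor_mul, Module.End.mul_apply]
  | add b c hb hc => simp [hb, hc, LinearMap.rTensor_add]
  | smul t b hb => simp [hb, LinearMap.rTensor_smul]

/-- A right comodule endomorphism `f` of `A` is determined by the functional `ε ∘ f`: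
`f(a) = Σ ε(f(a₁)) a₂`. -/
theorem recover (hΔ : IsComul k n q Δ) (hε : IsCounit k n q ε) {f : Module.End k (A k n q)}
    (hf : ∀ a, Δ (f a) = f.rTensor (A k n q) (Δ a)) {a : A k n q}
    {s : Finset (A k n q × A k n q)} (hs : Δ a = ∑ i ∈ s, i.1 ⊗ₜ[k] i.2) :
    f a = ∑ i ∈ s, ε (f i.1) • i.2 := by
  rw [← counit_left hΔ hε (f a), hf, hs]
  simp

/-- `ρ_c(ab) = Σ ρ_{c₁}(a) ρ_{c₂}(b)`, the operator form of identity (ii). -/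
theorem rho_mul_arg (hq : q ≠ 0) (hΔ : IsComul k n q Δ) (c a b : A k n q) :
    rho hq c (a * b) = LinearMap.mul' k _ (TensorProduct.map
      ((rho hq).toLinearMap.flip a) ((rho hq).toLinearMap.flip b) (Δ c)) := by
  induction c using A_induction generalizing a b with
  | one => simp [Algebra.TensorProduct.one_def]
  | X l m => simp [hΔ _ _, rho_X, rg_mul]
  | mul c d hc hd =>
    obtain ⟨s, hs⟩ := TensorProduct.exists_finset (Δ c)
    obtain ⟨t, ht⟩ := TensorProduct.exists_finset (Δ d)
    rw [hs] at hc
    rw [ht] at hd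
    simp only [map_sum, TensorProduct.map_tmul, LinearMap.mul'_apply, LinearMap.flip_apply,
      AlgHom.toLinearMap_apply] at hc hd
    simp only [map_mul, hs, ht, Finset.sum_mul_sum, Algebra.TensorProduct.tmul_mul_tmul, map_sum,
      TensorProduct.map_tmul, LinearMap.mul'_apply, LinearMap.flip_apply,
      AlgHom.toLinearMap_apply, Module.End.mul_apply, hd, hc]
    exact Finset.sum_comm
  | add c d hc hd => simp [hc, hd]
  | smul t c hc => simp [hc]

/-- `Σ ρ'_{b₂}(ρ_{b₁}(a)) = ε(b) a`. -/
theorem rho'_rho (hq : q ≠ 0) (hΔ : IsComul k n q Δ) (hε : IsCounit k n q ε) (b a : A k n q) :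
    TensorProduct.lift ((rho' hq).flip ∘ₗ (rho hq).toLinearMap.flip a) (Δ b) = ε b • a := by
  induction b using A_induction generalizing a with
  | one => simp [Algebra.TensorProduct.one_def, rho'_one]
  | X l m => simp [hΔ _ _, hε _ _, rho_X, rho'_rg]
  | mul c d hc hd =>
    obtain ⟨s, hs⟩ := TensorProduct.exists_finset (Δ c)
    obtain ⟨t, ht⟩ := TensorProduct.exists_finset (Δ d)
    rw [hs] at hc
    rw [ht] at hd
    simp only [map_sum, TensorProduct.lift.tmul, LinearMap.comp_apply, LinearMap.flip_apply,
      AlgHom.toLinearMap_apply] at hc hd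
    simp only [map_mul, hs, ht, Finset.sum_mul_sum, Algebra.TensorProduct.tmul_mul_tmul, map_sum,
      TensorProduct.lift.tmul, LinearMap.comp_apply, LinearMap.flip_apply,
      AlgHom.toLinearMap_apply, Module.End.mul_apply, rho'_mul]
    rw [Finset.sum_comm]
    simp only [← map_sum, hc, map_smul, hd, ← Finset.smul_sum, mul_smul]
  | add c d hc hd => simp only [map_add, add_smul, hc, hd]
  | smul t c hc => simp only [map_smul, hc, smul_assoc]

/-- `Σ ρ_{b₂}(ρ'_{b₁}(a)) = ε(b) a`. -/
theorem rho_rho' (hq : q ≠ 0) (hΔ : IsComul k n q Δ) (hε : IsCounit k n q ε) (b a : A k n q) :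
    TensorProduct.lift ((rho hq).toLinearMap.flip ∘ₗ (rho' hq).flip a) (Δ b) = ε b • a := by
  induction b using A_induction generalizing a with
  | one => simp [Algebra.TensorProduct.one_def, rho'_one]
  | X l m => simp [hΔ _ _, hε _ _, rho_X, rg_rho']
  | mul c d hc hd =>
    obtain ⟨s, hs⟩ := TensorProduct.exists_finset (Δ c)
    obtain ⟨t, ht⟩ := TensorProduct.exists_finset (Δ d)
    rw [hs] at hc
    rw [ht] at hd
    simp only [map_sum, TensorProduct.lift.tmul, LinearMap.comp_apply, LinearMap.flip_apply,
      AlgHom.toLinearMap_apply] at hc hd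
    simp only [map_mul, hs, ht, Finset.sum_mul_sum, Algebra.TensorProduct.tmul_mul_tmul, map_sum,
      TensorProduct.lift.tmul, LinearMap.comp_apply, LinearMap.flip_apply,
      AlgHom.toLinearMap_apply, Module.End.mul_apply, rho'_mul]
    simp only [← map_sum, hd, map_smul, hc, ← Finset.smul_sum, smul_smul, mul_comm]
  | add c d hc hd => simp only [map_add, add_smul, hc, hd]
  | smul t c hc => simp only [map_smul, hc, smul_assoc]

/-- The entries of the R-matrix, in the form in which the values of `r` on generators are
prescribed. -/
theorem S_value (q : k) (i j l m : Fin n) :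
    S q (fun x w => if w = m then if x = j then (1 : k) else 0 else 0) i l =
      if i = j ∧ l = m ∧ i = l then q
      else if i = j ∧ l = m then 1
      else if l = j ∧ m = i ∧ j < i then q - q⁻¹
      else 0 := by
  unfold S
  by_cases h1 : i = j ∧ l = m
  · obtain ⟨rfl, rfl⟩ := h1
    by_cases h : i = l
    · simp [h]
    · simp [h]
  by_cases h2 : l = j ∧ m = i
  · obtain ⟨rfl, rfl⟩ := h2
    have h : m ≠ l := fun h => h1 ⟨h, h.symm⟩
    simp [h]
  have e1 : ¬ (l = m ∧ i = j) := fun h => h1 h.symm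
  have e2 : ¬ (i = m ∧ l = j) := fun h => h2 ⟨h.2, h.1.symm⟩
  have e3 : ¬ (i = j ∧ l = m ∧ i = l) := fun h => h1 ⟨h.1, h.2.1⟩
  have e4 : ¬ (l = j ∧ m = i ∧ j < i) := fun h => h2 ⟨h.1, h.2.1⟩
  simp only [← ite_and, if_neg e1, if_neg e2, if_neg e3, if_neg e4, if_neg h1, smul_zero, ite_self,
    add_zero]

theorem rho_one_arg (hq : q ≠ 0) (hε : IsCounit k n q ε) (b : A k n q) :
    rho hq b 1 = ε b • 1 := by
  induction b using A_induction with
  | one => simp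
  | X l m => simp [rho_X, rg_one, hε _ _]
  | mul b c hb hc =>
    rw [map_mul, Module.End.mul_apply, hc, map_smul, hb, smul_smul, map_mul, mul_comm]
  | add b c hb hc => simp [hb, hc, add_smul]
  | smul t b hb => simp [hb, mul_smul]

/-- The operators `λ_b(a) = Σ a₁ r(a₂,b)`, where `r(a,b) = ε(ρ_b(a))`. -/
def lam (hq : q ≠ 0) (Δ : A k n q →ₐ[k] A k n q ⊗[k] A k n q) (ε : A k n q →ₐ[k] k) :
    A k n q →ₗ[k] Module.End k (A k n q) :=
  LinearMap.mk₂ k (fun b a => TensorProduct.rid k _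
      ((ε.toLinearMap ∘ₗ rho hq b).lTensor (A k n q) (Δ a)))
    (by simp [LinearMap.comp_add, LinearMap.lTensor_add])
    (by simp [LinearMap.comp_smul, LinearMap.lTensor_smul]) (by simp) (by simp)

theorem lam_eq (hq : q ≠ 0) (b : A k n q) {a : A k n q}
    {s : Finset (A k n q × A k n q)} (hs : Δ a = ∑ i ∈ s, i.1 ⊗ₜ[k] i.2) :
    lam hq Δ ε b a = ∑ i ∈ s, ε (rho hq b i.2) • i.1 := by
  simp [lam, hs]

theorem lam_one (hq : q ≠ 0) (hΔ : IsComul k n q Δ) (hε : IsCounit k n q ε) (a : A k n q) :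
    lam hq Δ ε 1 a = a := by
  conv_rhs => rw [← counit_right hΔ hε a]
  simp [lam, Module.End.one_eq_id]

theorem lam_rho (hq : q ≠ 0) (hΔ : IsComul k n q Δ) (b c a : A k n q) :
    lam hq Δ ε b (rho hq c a) = rho hq c (lam hq Δ ε b a) := by
  obtain ⟨s, hs⟩ := TensorProduct.exists_finset (Δ a)
  rw [lam_eq hq b hs]
  simp [lam, rho_colinear hq hΔ, hs]

/-- `λ_{bc} = λ_c ∘ λ_b`, from coassociativity and identity (iii). -/
theorem lam_mul (hq : q ≠ 0) (hΔ : IsComul k n q Δ) (hε : IsCounit k n q ε) (b c a : A k n q) :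
    lam hq Δ ε (b * c) a = lam hq Δ ε c (lam hq Δ ε b a) := by
  obtain ⟨s, hs⟩ := TensorProduct.exists_finset (Δ a)
  let T : A k n q ⊗[k] (A k n q ⊗[k] A k n q) →ₗ[k] A k n q :=
    (TensorProduct.rid k _).toLinearMap ∘ₗ ((TensorProduct.lid k k).toLinearMap ∘ₗ
      TensorProduct.map (ε.toLinearMap ∘ₗ rho hq c) (ε.toLinearMap ∘ₗ rho hq b)).lTensor (A k n q)
  have h := congrArg T (coassoc hΔ a)
  have hl : T (TensorProduct.assoc k _ _ _ (Δ.toLinearMap.rTensor (A k n q) (Δ a))) =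
      lam hq Δ ε c (lam hq Δ ε b a) := by
    rw [lam_eq hq b hs, hs]
    simp only [map_sum, LinearMap.rTensor_tmul, map_smul]
    refine Finset.sum_congr rfl fun i _ => ?_
    obtain ⟨t, ht⟩ := TensorProduct.exists_finset (Δ i.1)
    rw [lam_eq hq c ht]
    simp [ht, TensorProduct.sum_tmul, T, Finset.smul_sum, smul_smul, mul_comm]
  have hr : T (Δ.toLinearMap.lTensor (A k n q) (Δ a)) = lam hq Δ ε (b * c) a := by
    rw [lam_eq hq _ hs, hs]
    simp only [map_sum, LinearMap.lTensor_tmul]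
    refine Finset.sum_congr rfl fun i _ => ?_
    obtain ⟨t, ht⟩ := TensorProduct.exists_finset (Δ i.2)
    rw [map_mul, Module.End.mul_apply, recover hΔ hε (rho_colinear hq hΔ c) ht]
    simp [ht, TensorProduct.tmul_sum, T, Finset.sum_smul]
  rw [← hl, ← hr, h]

theorem lam_X_mul (hq : q ≠ 0) (l m : Fin n) (a b : A k n q) :
    lam hq Δ ε (X k n q l m) (a * b) =
      ∑ t, lam hq Δ ε (X k n q l t) a * lam hq Δ ε (X k n q t m) b := by
  obtain ⟨s, hs⟩ := TensorProduct.exists_finset (Δ a)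
  obtain ⟨t, ht⟩ := TensorProduct.exists_finset (Δ b)
  simp only [lam_eq hq _ hs, lam_eq hq _ ht]
  simp only [lam, LinearMap.mk₂_apply, map_mul, hs, ht, Finset.sum_mul_sum,
    Algebra.TensorProduct.tmul_mul_tmul, map_sum, LinearMap.lTensor_tmul, LinearMap.comp_apply,
    rho_X, rg_mul, AlgHom.toLinearMap_apply, TensorProduct.rid_tmul, Finset.sum_smul,
    smul_mul_smul_comm]
  conv_rhs => rw [Finset.sum_comm]
  refine Finset.sum_congr rfl fun i _ => ?_
  exact Finset.sum_comm

theorem lam_X_X (hq : q ≠ 0) (hΔ : IsComul k n q Δ) (hε : IsCounit k n q ε) (i j l m : Fin n) :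
    lam hq Δ ε (X k n q l m) (X k n q i j) =
      ∑ t, S q (fun x w => if x = j ∧ w = m then (1 : k) else 0) t l • X k n q i t := by
  simp only [lam, LinearMap.mk₂_apply, hΔ _ _, map_sum, LinearMap.lTensor_tmul,
    LinearMap.comp_apply, AlgHom.toLinearMap_apply, TensorProduct.rid_tmul, rho_X, rg_X]
  refine Finset.sum_congr rfl fun t _ => ?_
  have := map_S q ε.toLinearMap (fun x w => if w = m then X k n q x j else 0) t l
  simp only [AlgHom.toLinearMap_apply] at this
  rw [this]
  congr 2; ext x w
  by_cases hw : w = m <;> simp [hw, hε _ _]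

/-- The exchange relation `Σ ρ_{b₁}(a) b₂ = Σ b₁ λ_{b₂}(a)` for `b = X_{lm}`. If `a` is a generator
too, it is the RTT relation. -/
theorem rg_exchange (hq : q ≠ 0) (hΔ : IsComul k n q Δ) (hε : IsCounit k n q ε) (l m : Fin n)
    (a : A k n q) : ∑ s, rg hq l s a * X k n q s m =
      ∑ s, X k n q l s * lam hq Δ ε (X k n q s m) a := by
  induction a using A_induction generalizing l m with
  | one =>
    have h (s : Fin n) : lam hq Δ ε (X k n q s m) 1 = if s = m then 1 else 0 := by
      simp [lam, Algebra.TensorProduct.one_def, rho_X, rg_one]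
    simp [h, rg_one]
  | X i j =>
    have h (s : Fin n) := map_S q (LinearMap.mulRight k (X k n q s m))
      (fun x w => if w = s then X k n q x j else 0) i l
    simp only [LinearMap.mulRight_apply] at h
    simp only [rg_X, h, sum_S, lam_X_X hq hΔ hε]
    have h2 : S q (fun x w => X k n q x j * X k n q w m) i l = _ := X_isRTT hq i l j m
    simp only [ite_mul, zero_mul, Finset.sum_ite_eq, Finset.mem_univ, if_true, h2, S_delta,
      add_smul, Finset.sum_add_distrib, smul_assoc]
    simp [ite_and, mul_add, Finset.sum_add_distrib]
  | mul a b ha hb =>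
    simp only [rg_mul, Finset.sum_mul, mul_assoc]
    rw [Finset.sum_comm]
    simp only [← Finset.mul_sum, hb]
    simp only [Finset.mul_sum, ← mul_assoc]
    rw [Finset.sum_comm]
    simp only [← Finset.sum_mul, ha]
    simp only [lam_X_mul hq, Finset.mul_sum, Finset.sum_mul, mul_assoc]
    exact Finset.sum_comm
  | add a b ha hb => simp only [map_add, add_mul, mul_add, Finset.sum_add_distrib, ha, hb]
  | smul t a ha =>
    simp only [map_smul, smul_mul_assoc, mul_smul_comm, ← Finset.smul_sum, ha]

/-- `Σ ρ_{b₁}(a) b₂ = Σ b₁ λ_{b₂}(a)`, the operator form of identity (i). -/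
theorem exchange (hq : q ≠ 0) (hΔ : IsComul k n q Δ) (hε : IsCounit k n q ε) (b a : A k n q) :
    LinearMap.mul' k _ (TensorProduct.map ((rho hq).toLinearMap.flip a) LinearMap.id (Δ b)) =
      LinearMap.mul' k _ (TensorProduct.map LinearMap.id ((lam hq Δ ε).flip a) (Δ b)) := by
  induction b using A_induction generalizing a with
  | one => simp [Algebra.TensorProduct.one_def, lam_one hq hΔ hε]
  | X l m => simpa [hΔ _ _, rho_X] using rg_exchange hq hΔ hε l m a
  | mul c d hc hd =>
    obtain ⟨s, hs⟩ := TensorProduct.exists_finset (Δ c)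
    obtain ⟨t, ht⟩ := TensorProduct.exists_finset (Δ d)
    rw [hs] at hc
    rw [ht] at hd
    simp only [map_sum, TensorProduct.map_tmul, LinearMap.mul'_apply, LinearMap.flip_apply,
      AlgHom.toLinearMap_apply, LinearMap.id_apply] at hc hd
    simp only [map_mul, hs, ht, Finset.sum_mul_sum, Algebra.TensorProduct.tmul_mul_tmul, map_sum,
      TensorProduct.map_tmul, LinearMap.mul'_apply, LinearMap.flip_apply,
      AlgHom.toLinearMap_apply, Module.End.mul_apply, LinearMap.id_apply, lam_mul hq hΔ hε]
    calc _ = ∑ j ∈ t, (∑ i ∈ s, rho hq i.1 (rho hq j.1 a) * i.2) * j.2 := by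
          rw [Finset.sum_comm]; simp only [Finset.sum_mul, mul_assoc]
      _ = ∑ i ∈ s, i.1 * ∑ j ∈ t, rho hq j.1 (lam hq Δ ε i.2 a) * j.2 := by
          simp only [hc, lam_rho hq hΔ, Finset.sum_mul, Finset.mul_sum, mul_assoc]
          exact Finset.sum_comm
      _ = _ := by simp only [hd, Finset.mul_sum, mul_assoc]
  | add c d hc hd => simp only [map_add, hc, hd]
  | smul t c hc => simp only [map_smul, hc]

end Co
end QMat

/-- `O_q(M_n(k))` is a coquasitriangular bialgebra: there is a convolution-invertible
bilinear form `r` satisfying (1.7)(i)-(iv) with the prescribed values on generators. -/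
theorem stmt0 (k : Type*) [Field k] (n : ℕ) (hn : 0 < n) (q : k) (hq : q ≠ 0)
    (Δ : A k n q →ₐ[k] A k n q ⊗[k] A k n q) (ε : A k n q →ₐ[k] k)
    (hΔ : IsComul k n q Δ) (hε : IsCounit k n q ε) :
    ∃ r : A k n q →ₗ[k] A k n q →ₗ[k] k,
      (∃ r' : A k n q →ₗ[k] A k n q →ₗ[k] k,
        ∀ a b : A k n q,
          convPair k n q Δ r r' a b = ε a * ε b ∧
            convPair k n q Δ r' r a b = ε a * ε b) ∧
      IsRForm k n q Δ ε r := by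
  refine ⟨(rho hq).toLinearMap.flip.compr₂ ε.toLinearMap,
    ⟨(rho' hq).flip.compr₂ ε.toLinearMap, fun a b => ?_⟩, fun a b => ?_, fun a b c => ?_,
    fun a b c => ?_, fun a => ?_, fun i j l m => ?_⟩
  · obtain ⟨s, hs⟩ := TensorProduct.exists_finset (Δ a)
    obtain ⟨t, ht⟩ := TensorProduct.exists_finset (Δ b)
    constructor
    · have h := congrArg ε (rho'_rho hq hΔ hε b a)
      rw [map_smul, smul_eq_mul, mul_comm] at h
      rw [← h, ht, convPair, sweedler2, hs, ht]
      simp [TensorProduct.sum_tmul, TensorProduct.tmul_sum,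
        recover hΔ hε (rho_colinear hq hΔ _) hs]
    · have h := congrArg ε (rho_rho' hq hΔ hε b a)
      rw [map_smul, smul_eq_mul, mul_comm] at h
      rw [← h, ht, convPair, sweedler2, hs, ht]
      simp [TensorProduct.sum_tmul, TensorProduct.tmul_sum,
        recover hΔ hε (rho'_colinear hq hΔ _) hs]
  · obtain ⟨s, hs⟩ := TensorProduct.exists_finset (Δ a)
    obtain ⟨t, ht⟩ := TensorProduct.exists_finset (Δ b)
    have h := exchange hq hΔ hε b a
    rw [ht] at h
    rw [sweedler2, hs, ht]
    simpa [TensorProduct.sum_tmul, TensorProduct.tmul_sum, mulRev,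
      recover hΔ hε (rho_colinear hq hΔ _) hs, lam_eq hq _ hs, Finset.sum_mul, Finset.mul_sum]
      using h
  · obtain ⟨t, ht⟩ := TensorProduct.exists_finset (Δ c)
    simp [rho_mul_arg hq hΔ c a b, biform, ht]
  · obtain ⟨s, hs⟩ := TensorProduct.exists_finset (Δ a)
    simp [biform, hs, recover hΔ hε (rho_colinear hq hΔ _) hs]
  · refine ⟨by simp, ?_⟩
    simp [rho_one_arg hq hε]
  · simp only [LinearMap.compr₂_apply, LinearMap.flip_apply, AlgHom.toLinearMap_apply, rho_X, rg_X]
    have h := map_S q ε.toLinearMap (fun x w => if w = m then X k n q x j else 0) i l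
    simp only [AlgHom.toLinearMap_apply, apply_ite ε, hε _ _, map_zero] at h
    rw [h]
    exact S_value q i j l m

end
end

section
/- For every i ∈ {1,…,n} and all index sets I,J ⊆ {1,…,n} with |I| = |J|, one has r(X_{ii},[I|J]) = r([I|J],X_{ii}) = q^{δ(i,I)} δ(I,J), where δ(i,I) = 1 if i ∈ I and 0 otherwise, and δ(I,J) = 1 if I = J and 0 otherwise. -/
/-!
On generators `r(X_{ij}, X_{lm})` vanishes unless `j ≤ i` and `l ≤ m`. Conditions (ii) and (iii)
expand `r(X_{ii}, -)` and `r(-, X_{ii})` on a monomial as sums over paths of indices from `i` to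
`i`; by the triangularity these paths are monotone, hence constant, so both functionals are
multiplicative on monomials (`r_prod_left`, `r_prod_right`), with the factor `diagVal` at each
generator. That factor kills every off-diagonal generator, so the only monomial of `[I|J]` which
survives is the one for `σ = 1`, and only when `I = J` (`apply_qMinor`).
-/

open scoped TensorProduct
open scoped Classical

noncomputable section

open QMat

namespace QMat

/-- The common value of `r(X_{ii}, X_{ab})` and `r(X_{ab}, X_{ii})` for `p = (a, b)`. -/
def diagVal {k : Type*} [Field k] {n : ℕ} (q : k) (i : Fin n) (p : Fin n × Fin n) : k :=
  if p.1 = p.2 then if p.1 = i then q else 1 else 0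

section

variable {k : Type*} [Field k] {n : ℕ} {q : k}
  {Δ : A k n q →ₐ[k] A k n q ⊗[k] A k n q} {ε : A k n q →ₐ[k] k}
  {r : A k n q →ₗ[k] A k n q →ₗ[k] k}

lemma biform_comul_X (hΔ : IsComul k n q Δ) (f g : A k n q →ₗ[k] k) (a b : Fin n) :
    biform k n q f g (Δ (X k n q a b)) = ∑ l, f (X k n q a l) * g (X k n q l b) := by
  rw [hΔ]
  simp [biform]

lemma r_X_diag_right (hr : IsRForm k n q Δ ε r) (p : Fin n × Fin n) (i : Fin n) :
    r (X k n q p.1 p.2) (X k n q i i) = diagVal q i p := by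
  rw [hr.2.2.2.2, diagVal]
  split_ifs <;> grind

lemma r_X_diag_left (hr : IsRForm k n q Δ ε r) (p : Fin n × Fin n) (i : Fin n) :
    r (X k n q i i) (X k n q p.1 p.2) = diagVal q i p := by
  rw [hr.2.2.2.2, diagVal]
  split_ifs <;> grind

lemma r_X_eq_zero_right (hr : IsRForm k n q Δ ε r) (p : Fin n × Fin n) {a b : Fin n}
    (h : b < a) : r (X k n q p.1 p.2) (X k n q a b) = 0 := by
  rw [hr.2.2.2.2]
  split_ifs <;> grind

lemma r_X_eq_zero_left (hr : IsRForm k n q Δ ε r) (p : Fin n × Fin n) {a b : Fin n}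
    (h : a < b) : r (X k n q a b) (X k n q p.1 p.2) = 0 := by
  rw [hr.2.2.2.2]
  split_ifs <;> grind

/-- `r(-, X_{ab})` on monomials: zero strictly below the diagonal, multiplicative on it. The two
claims are proved together, as the second uses the first to discard the non-constant paths. -/
lemma r_prod_left (hΔ : IsComul k n q Δ) (hε : IsCounit k n q ε) (hr : IsRForm k n q Δ ε r)
    (L : List (Fin n × Fin n)) :
    (∀ a b, b < a → r (L.map fun p => X k n q p.1 p.2).prod (X k n q a b) = 0) ∧
    ∀ a, r (L.map fun p => X k n q p.1 p.2).prod (X k n q a a) = (L.map (diagVal q a)).prod := by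
  induction L with
  | nil =>
    refine ⟨fun a b h => ?_, fun a => ?_⟩
    · simp [(hr.2.2.2.1 _).2, hε a b, h.ne']
    · simp [(hr.2.2.2.1 _).2, hε a a]
  | cons p L ih =>
    simp only [List.map_cons, List.prod_cons, hr.2.1, biform_comul_X hΔ]
    refine ⟨fun a b h => Finset.sum_eq_zero fun l _ => ?_, fun a => ?_⟩
    · rcases lt_or_ge l a with hl | hl
      · rw [r_X_eq_zero_right hr p hl, zero_mul]
      · rw [ih.1 l b (h.trans_le hl), mul_zero]
    · rw [Finset.sum_eq_single a, r_X_diag_right hr, ih.2]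
      · intro l _ hl
        rcases lt_or_gt_of_ne hl with hl | hl
        · rw [r_X_eq_zero_right hr p hl, zero_mul]
        · rw [ih.1 l a hl, mul_zero]
      · simp

/-- `r(X_{ab}, -)` on monomials: zero strictly above the diagonal, multiplicative on it. -/
lemma r_prod_right (hΔ : IsComul k n q Δ) (hε : IsCounit k n q ε) (hr : IsRForm k n q Δ ε r)
    (L : List (Fin n × Fin n)) :
    (∀ a b, a < b → r (X k n q a b) (L.map fun p => X k n q p.1 p.2).prod = 0) ∧
    ∀ a, r (X k n q a a) (L.map fun p => X k n q p.1 p.2).prod = (L.map (diagVal q a)).prod := by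
  induction L with
  | nil =>
    refine ⟨fun a b h => ?_, fun a => ?_⟩
    · simp [(hr.2.2.2.1 _).1, hε a b, h.ne]
    · simp [(hr.2.2.2.1 _).1, hε a a]
  | cons p L ih =>
    simp only [List.map_cons, List.prod_cons, hr.2.2.1, biform_comul_X hΔ, LinearMap.flip_apply]
    refine ⟨fun a b h => Finset.sum_eq_zero fun l _ => ?_, fun a => ?_⟩
    · rcases lt_or_ge a l with hl | hl
      · rw [ih.1 a l hl, zero_mul]
      · rw [r_X_eq_zero_left hr p (hl.trans_lt h), mul_zero]
    · rw [Finset.sum_eq_single a, r_X_diag_left hr, ih.2, mul_comm]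
      · intro l _ hl
        rcases lt_or_gt_of_ne hl with hl | hl
        · rw [r_X_eq_zero_left hr p hl, mul_zero]
        · rw [ih.1 a l hl, zero_mul]
      · simp

lemma inversions_one (t : ℕ) : inversions (1 : Equiv.Perm (Fin t)) = 0 := by
  simp only [inversions, Finset.card_eq_zero, Finset.filter_eq_empty_iff]
  rintro p - ⟨h1, h2⟩
  exact lt_asymm h1 h2

/-- A linear functional which is multiplicative on monomials with factors `diagVal q i` takes the
value `q^{δ(i,I)} δ(I,J)` at `[I|J]`. -/
lemma apply_qMinor (i : Fin n) (φ : A k n q →ₗ[k] k)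
    (hφ : ∀ L : List (Fin n × Fin n),
      φ (L.map fun p => X k n q p.1 p.2).prod = (L.map (diagVal q i)).prod)
    (I J : Finset (Fin n)) (hIJ : I.card = J.card) :
    φ (qMinor k n q I J) = q ^ (if i ∈ I then 1 else 0) * (if I = J then 1 else 0) := by
  have key : ∀ u v : Fin I.card → Fin n,
      φ (List.ofFn fun l => X k n q (u l) (v l)).prod = ∏ l, diagVal q i (u l, v l) := by
    intro u v
    have := hφ (List.ofFn fun l => (u l, v l))
    simpa [List.map_ofFn, Function.comp_def, List.prod_ofFn] using this
  rw [qMinor, dif_pos hIJ, map_sum]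
  simp only [map_smul, key, smul_eq_mul]
  by_cases h : I = J
  · subst h
    rw [Finset.sum_eq_single 1, inversions_one]
    · have h1 : ∏ l : Fin I.card, diagVal q i
          (↑((I.orderIsoOfFin rfl) l), ↑((I.orderIsoOfFin rfl) l)) =
          ∏ x : I, (if (x : Fin n) = i then q else 1) := by
        simp only [diagVal, if_true]
        exact Equiv.prod_comp (I.orderIsoOfFin rfl).toEquiv
          fun x : I => if (x : Fin n) = i then q else 1
      simp only [Equiv.Perm.one_apply, pow_zero, one_mul, h1]
      rw [Finset.prod_coe_sort I fun x => if x = i then q else 1, Finset.prod_ite_eq']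
      split_ifs <;> simp
    · intro σ _ hσ
      obtain ⟨l, hl⟩ : ∃ l, σ l ≠ l := by
        by_contra! hc
        exact hσ (Equiv.ext hc)
      rw [Finset.prod_eq_zero (Finset.mem_univ l), mul_zero]
      rw [diagVal, if_neg]
      simpa [Subtype.ext_iff] using hl
    · simp
  · rw [if_neg h, mul_zero]
    refine Finset.sum_eq_zero fun σ _ => ?_
    -- Otherwise `J` would be contained in `I`, and the two have the same cardinality.
    obtain ⟨l, hl⟩ : ∃ l : Fin I.card, (↑((I.orderIsoOfFin rfl) (σ l)) : Fin n) ≠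
        ↑((J.orderIsoOfFin hIJ.symm) l) := by
      by_contra! hc
      refine h (Finset.eq_of_subset_of_card_le (fun x hx => ?_) hIJ.le).symm
      obtain ⟨l, hl⟩ := (J.orderIsoOfFin hIJ.symm).surjective ⟨x, hx⟩
      have hx' : (↑((I.orderIsoOfFin rfl) (σ l)) : Fin n) = x := by rw [hc l, hl]
      rw [← hx']
      exact Subtype.coe_prop _
    rw [Finset.prod_eq_zero (Finset.mem_univ l), mul_zero]
    exact if_neg hl

end

end QMat

/-- `r(X_{ii},[I|J]) = r([I|J],X_{ii}) = q^{δ(i,I)} δ(I,J)`. -/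
theorem stmt2 (k : Type*) [Field k] (n : ℕ) (hn : 0 < n) (q : k) (hq : q ≠ 0)
    (Δ : A k n q →ₐ[k] A k n q ⊗[k] A k n q) (ε : A k n q →ₐ[k] k)
    (hΔ : IsComul k n q Δ) (hε : IsCounit k n q ε)
    (r : A k n q →ₗ[k] A k n q →ₗ[k] k) (hr : IsRForm k n q Δ ε r)
    (i : Fin n) (I J : Finset (Fin n)) (hIJ : I.card = J.card) :
    r (X k n q i i) (qMinor k n q I J) =
        q ^ (if i ∈ I then 1 else 0) * (if I = J then 1 else 0) ∧
    r (qMinor k n q I J) (X k n q i i) =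
        q ^ (if i ∈ I then 1 else 0) * (if I = J then 1 else 0) := by
  exact ⟨apply_qMinor i (r (X k n q i i)) (fun L => (r_prod_right hΔ hε hr L).2 i) I J hIJ,
    apply_qMinor i (r.flip (X k n q i i)) (fun L => (r_prod_left hΔ hε hr L).2 i) I J hIJ⟩

end
end

section
/- If i,j ∈ {1,…,n} with i < j, then r(X_{ij},a) = 0 for all a ∈ A; and if i > j, then r(a,X_{ij}) = 0 for all a ∈ A. -/
/-!
For fixed `i < j`, the multiplicativity of `r` in its second argument gives
`r(X_{ij}, bc) = Σ_l r(X_{il}, c) r(X_{lj}, b)`, and every `l` satisfies `i < l` or `l < j`. Hence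
the set of `a` with `r(X_{ij}, a) = 0` for all `i < j` is closed under products. It is a subspace,
it contains `1` since `ε(X_{ij}) = 0`, and it contains the generators by the prescribed values of
`r`; so it is all of `A` (`QMat.A_induction`). The case `i > j` is the mirror image, using
multiplicativity in the first argument.
-/

open scoped TensorProduct
open scoped Classical

noncomputable section

open QMat

/-- To prove a property of all of `O_q(M_n(k))` it suffices to check it on scalars and on the
generators `X_{ij}`, and to show that sums and products preserve it. -/
theorem QMat.A_induction_s3 {k : Type*} [Field k] {n : ℕ} {q : k} {P : A k n q → Prop}
    (scalar : ∀ c : k, P (algebraMap k (A k n q) c)) (gen : ∀ i j, P (X k n q i j))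
    (mul : ∀ a b, P a → P b → P (a * b)) (add : ∀ a b, P a → P b → P (a + b))
    (a : A k n q) : P a := by
  obtain ⟨x, rfl⟩ := RingQuot.mkAlgHom_surjective k (Rel k n q) a
  induction x using FreeAlgebra.induction with
  | grade0 c => simpa only [AlgHom.commutes] using scalar c
  | grade1 p => exact gen p.1 p.2
  | mul a b ha hb => simpa only [map_mul] using mul _ _ ha hb
  | add a b ha hb => simpa only [map_add] using add _ _ ha hb

/-- `r(X_{ij}, -) ≡ 0` when `i < j`, and `r(-, X_{ij}) ≡ 0` when `i > j`. -/
theorem stmt3 (k : Type*) [Field k] (n : ℕ) (hn : 0 < n) (q : k) (hq : q ≠ 0)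
    (Δ : A k n q →ₐ[k] A k n q ⊗[k] A k n q) (ε : A k n q →ₐ[k] k)
    (hΔ : IsComul k n q Δ) (hε : IsCounit k n q ε)
    (r : A k n q →ₗ[k] A k n q →ₗ[k] k) (hr : IsRForm k n q Δ ε r)
    (i j : Fin n) :
    (i < j → ∀ a : A k n q, r (X k n q i j) a = 0) ∧
    (j < i → ∀ a : A k n q, r a (X k n q i j) = 0) := by
  obtain ⟨-, hmul_left, hmul_right, hone, hgen⟩ := hr
  -- `r(X_{ij}, bc) = Σ_l r(X_{il}, c) r(X_{lj}, b)`
  have expand_right (i j : Fin n) (b c : A k n q) : r (X k n q i j) (b * c) =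
      ∑ l, r (X k n q i l) c * r (X k n q l j) b := by
    simp [hmul_right, hΔ i j, biform]
  -- `r(ab, X_{ij}) = Σ_l r(a, X_{il}) r(b, X_{lj})`
  have expand_left (i j : Fin n) (a b : A k n q) : r (a * b) (X k n q i j) =
      ∑ l, r a (X k n q i l) * r b (X k n q l j) := by
    simp [hmul_left, hΔ i j, biform]
  constructor
  · intro hij a
    -- The induction needs all pairs `i < j` at once, as products involve the other indices `l`.
    revert i j
    induction a using QMat.A_induction_s3 with
    | scalar c =>
      intro i j hij
      simp [Algebra.algebraMap_eq_smul_one, (hone _).1, hε i j, hij.ne]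
    | gen l m =>
      intro i j hij
      simp [hgen, hij.ne, hij.not_gt]
    | mul b c hb hc =>
      intro i j hij
      rw [expand_right]
      refine Finset.sum_eq_zero fun l _ => ?_
      rcases lt_or_ge i l with h | h
      · rw [hc i l h, zero_mul]
      · rw [hb l j (h.trans_lt hij), mul_zero]
    | add b c hb hc =>
      intro i j hij
      rw [map_add, hb i j hij, hc i j hij, add_zero]
  · intro hji a
    revert i j
    induction a using QMat.A_induction_s3 with
    | scalar c =>
      intro i j hji
      simp [Algebra.algebraMap_eq_smul_one, (hone _).2, hε i j, hji.ne']
    | gen l m =>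
      intro i j hji
      rw [hgen, if_neg fun h => hji.ne' h.2.1, if_neg fun h => hji.ne' h.2,
        if_neg]
      rintro ⟨rfl, rfl, h⟩
      exact h.not_gt hji
    | mul b c hb hc =>
      intro i j hji
      rw [expand_left]
      refine Finset.sum_eq_zero fun l _ => ?_
      rcases lt_or_ge l i with h | h
      · rw [hb i l h, zero_mul]
      · rw [hc l j (hji.trans_le h), mul_zero]
    | add b c hb hc =>
      intro i j hji
      rw [map_add, LinearMap.add_apply, hb i j hji, hc i j hji, add_zero]

end
end

section
/- Let I,J ⊆ {1,…,n} with |I| = |J|. If I ≥ J fails, then r([I|J],a) = 0 for all a ∈ A; and if I ≤ J fails, then r(a,[I|J]) = 0 for all a ∈ A. -/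
/-!
The form `r` is triangular: `r(X_{ij}, -)` vanishes identically for `i < j`, and `r(-, X_{ij})`
vanishes identically for `i > j`. Both hold on generators by the prescribed values. They extend to
products because `r(X_{ij}, bc) = Σ_l r(X_{il}, c) r(X_{lj}, b)`, where `i < j` forces `i < l` or
`l < j` for every `l`, and symmetrically on the other side
(`r_X_left_eq_zero`, `r_X_right_eq_zero`).

By (ii) and (iii), the set of `x` with `r(x, -) = 0` and the set of `y` with `r(-, y) = 0` are
two-sided ideals. Hence if `r([I|J], -)` is nonzero, some monomial
`X_{i_{σ(1)} j_1} ⋯ X_{i_{σ(t)} j_t}` of `[I|J]` has `j_l ≤ i_{σ(l)}` for all `l`. A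
pigeonhole argument (`mono_le_of_perm_le`) shows that a rearrangement dominating `J` entrywise
exists only if `I ≥ J`. The other half is the same with the inequalities reversed.
-/

open scoped TensorProduct
open scoped Classical

noncomputable section

open QMat

namespace QMat

/-! ### Rearrangements and the componentwise order -/

lemma exists_ge_perm_le {t : ℕ} (σ : Equiv.Perm (Fin t)) (l : Fin t) :
    ∃ m, l ≤ m ∧ σ m ≤ l := by
  by_contra! h
  -- otherwise `σ` would inject the `t - l` indices `≥ l` into the `t - l - 1` indices `> l`
  have hc : (Finset.Ici l).card ≤ (Finset.Ioi l).card :=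
    Finset.card_le_card_of_injOn σ
      (fun m hm => by simpa using h m (by simpa using hm)) σ.injective.injOn
  rw [Fin.card_Ici, Fin.card_Ioi] at hc
  have := l.isLt
  omega

lemma mono_le_of_perm_le {t : ℕ} {α : Type*} [Preorder α] {f g : Fin t → α}
    (hf : Monotone f) (hg : Monotone g) (σ : Equiv.Perm (Fin t))
    (h : ∀ l, g l ≤ f (σ l)) : g ≤ f := by
  intro l
  obtain ⟨m, hlm, hml⟩ := exists_ge_perm_le σ l
  exact (hg hlm).trans ((h m).trans (hf hml))

/-- `setLE` with both sets enumerated by the same `Fin t`. -/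
lemma setLE_iff {n t : ℕ} {I J : Finset (Fin n)} (hI : I.card = t) (hJ : J.card = t) :
    setLE n I J ↔
      ∀ l : Fin t, (I.orderIsoOfFin hI l : Fin n) ≤ (J.orderIsoOfFin hJ l : Fin n) := by
  subst hI
  exact ⟨fun h => h.2 hJ.symm, fun h => ⟨hJ.symm, fun _ => h⟩⟩

lemma monotone_orderIsoOfFin {n t : ℕ} (I : Finset (Fin n)) (hI : I.card = t) :
    Monotone fun l : Fin t => (I.orderIsoOfFin hI l : Fin n) :=
  fun _ _ h => (I.orderIsoOfFin hI).monotone h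

/-! ### Triangularity of the form -/

section Form

variable {k : Type*} [Field k] {n : ℕ} {q : k}
  {Δ : A k n q →ₐ[k] A k n q ⊗[k] A k n q} {ε : A k n q →ₐ[k] k}
  {r : A k n q →ₗ[k] A k n q →ₗ[k] k}

/-- A property of elements of `O_q(M_n(k))` may be checked on scalars, generators, sums and
products. -/
lemma A_induction_s4 {P : A k n q → Prop} (hs : ∀ c : k, P (c • 1)) (hX : ∀ i j, P (X k n q i j))
    (hm : ∀ a b, P a → P b → P (a * b)) (ha : ∀ a b, P a → P b → P (a + b)) (a : A k n q) :
    P a := by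
  obtain ⟨a, rfl⟩ := RingQuot.mkAlgHom_surjective k (Rel k n q) a
  induction a using FreeAlgebra.induction with
  | grade0 c => rw [AlgHom.commutes, Algebra.algebraMap_eq_smul_one]; exact hs c
  | grade1 p => exact hX p.1 p.2
  | mul a b iha ihb => rw [map_mul]; exact hm _ _ iha ihb
  | add a b iha ihb => rw [map_add]; exact ha _ _ iha ihb

@[simp] lemma biform_tmul (f g : A k n q →ₗ[k] k) (a b : A k n q) :
    biform k n q f g (a ⊗ₜ[k] b) = f a * g b := by
  simp [biform]

@[simp] lemma biform_zero_left (g : A k n q →ₗ[k] k) : biform k n q 0 g = 0 := by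
  simp [biform]

@[simp] lemma biform_zero_right (f : A k n q →ₗ[k] k) : biform k n q f 0 = 0 := by
  simp [biform]

lemma r_X_left_eq_zero (hΔ : IsComul k n q Δ) (hε : IsCounit k n q ε)
    (hr : IsRForm k n q Δ ε r) {i j : Fin n} (hij : i < j) : r (X k n q i j) = 0 := by
  obtain ⟨-, -, h3, h4, h5⟩ := hr
  ext1 a
  revert i j
  induction a using A_induction_s4 with
  | hs c =>
    intro i j hij
    rw [map_smul, (h4 _).1, hε, if_neg hij.ne, smul_zero, LinearMap.zero_apply]
  | hX l m =>
    intro i j hij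
    rw [h5, if_neg (fun h => hij.ne h.1), if_neg (fun h => hij.ne h.1),
      if_neg (fun h => hij.not_gt h.2.2), LinearMap.zero_apply]
  | hm a b iha ihb =>
    intro i j hij
    rw [h3, hΔ, map_sum, LinearMap.zero_apply]
    refine Finset.sum_eq_zero fun l _ => ?_
    rw [biform_tmul, LinearMap.flip_apply, LinearMap.flip_apply]
    rcases lt_or_ge i l with h | h
    · rw [ihb h, LinearMap.zero_apply, zero_mul]
    · rw [iha (h.trans_lt hij), LinearMap.zero_apply, mul_zero]
  | ha a b iha ihb =>
    intro i j hij
    rw [map_add, iha hij, ihb hij, LinearMap.zero_apply, LinearMap.zero_apply,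
      LinearMap.zero_apply, add_zero]

lemma r_X_right_eq_zero (hΔ : IsComul k n q Δ) (hε : IsCounit k n q ε)
    (hr : IsRForm k n q Δ ε r) {i j : Fin n} (hij : j < i) : r.flip (X k n q i j) = 0 := by
  obtain ⟨-, h2, -, h4, h5⟩ := hr
  ext1 a
  rw [LinearMap.flip_apply, LinearMap.zero_apply]
  revert i j
  induction a using A_induction_s4 with
  | hs c =>
    intro i j hij
    rw [map_smul, LinearMap.smul_apply, (h4 _).2, hε, if_neg hij.ne', smul_zero]
  | hX l m =>
    intro i j hij
    rw [h5, if_neg (fun h => hij.ne' h.2.1), if_neg (fun h => hij.ne' h.2), if_neg]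
    rintro ⟨rfl, rfl, h⟩
    exact hij.not_gt h
  | hm a b iha ihb =>
    intro i j hij
    rw [h2, hΔ, map_sum]
    refine Finset.sum_eq_zero fun l _ => ?_
    rw [biform_tmul]
    rcases lt_or_ge l i with h | h
    · rw [iha h, zero_mul]
    · rw [ihb (hij.trans_le h), mul_zero]
  | ha a b iha ihb =>
    intro i j hij
    rw [map_add, LinearMap.add_apply, iha hij, ihb hij, add_zero]

/-- A linear map whose kernel absorbs products on both sides kills any product having a factor in
the kernel. -/
lemma map_prod_eq_zero {M : Type*} [AddCommMonoid M] [Module k M] (φ : A k n q →ₗ[k] M)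
    (hl : ∀ a b, φ a = 0 → φ (a * b) = 0) (hr : ∀ a b, φ b = 0 → φ (a * b) = 0)
    {L : List (A k n q)} {x : A k n q} (hx : x ∈ L) (h : φ x = 0) : φ L.prod = 0 := by
  obtain ⟨L₁, L₂, rfl⟩ := List.append_of_mem hx
  rw [List.prod_append, List.prod_cons]
  exact hr _ _ (hl _ _ h)

/-- A linear map with ideal kernel kills `[I|J]` as soon as, for each permutation `σ`, it kills
some factor `X_{i_{σ(l)} j_l}`. -/
lemma map_qMinor_eq_zero {M : Type*} [AddCommMonoid M] [Module k M] (φ : A k n q →ₗ[k] M)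
    (hl : ∀ a b, φ a = 0 → φ (a * b) = 0) (hr : ∀ a b, φ b = 0 → φ (a * b) = 0)
    {I J : Finset (Fin n)} (hIJ : I.card = J.card)
    (h : ∀ σ : Equiv.Perm (Fin I.card), ∃ l,
      φ (X k n q (I.orderIsoOfFin rfl (σ l)) (J.orderIsoOfFin hIJ.symm l)) = 0) :
    φ (qMinor k n q I J) = 0 := by
  rw [qMinor, dif_pos hIJ, map_sum]
  refine Finset.sum_eq_zero fun σ _ => ?_
  obtain ⟨l, hσ⟩ := h σ
  rw [map_smul, map_prod_eq_zero φ hl hr (List.mem_ofFn.2 ⟨l, rfl⟩) hσ, smul_zero]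

end Form

end QMat

/-- `r([I|J], -) ≡ 0` when `I ≱ J`, and `r(-, [I|J]) ≡ 0` when `I ≰ J`. -/
theorem stmt4 (k : Type*) [Field k] (n : ℕ) (hn : 0 < n) (q : k) (hq : q ≠ 0)
    (Δ : A k n q →ₐ[k] A k n q ⊗[k] A k n q) (ε : A k n q →ₐ[k] k)
    (hΔ : IsComul k n q Δ) (hε : IsCounit k n q ε)
    (r : A k n q →ₗ[k] A k n q →ₗ[k] k) (hr : IsRForm k n q Δ ε r)
    (I J : Finset (Fin n)) (hIJ : I.card = J.card) :
    (¬ setLE n J I → ∀ a : A k n q, r (qMinor k n q I J) a = 0) ∧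
    (¬ setLE n I J → ∀ a : A k n q, r a (qMinor k n q I J) = 0) := by
  refine ⟨fun hn a => ?_, fun hn a => ?_⟩
  · rw [setLE_iff hIJ.symm rfl] at hn
    refine LinearMap.congr_fun (map_qMinor_eq_zero r (fun a b h => ?_) (fun a b h => ?_) hIJ
      fun σ => ?_) a
    · ext1 c
      rw [hr.2.1, h, biform_zero_left, LinearMap.zero_apply, LinearMap.zero_apply]
    · ext1 c
      rw [hr.2.1, h, biform_zero_right, LinearMap.zero_apply, LinearMap.zero_apply]
    · by_contra! hσ
      refine hn (mono_le_of_perm_le (monotone_orderIsoOfFin I rfl)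
        (monotone_orderIsoOfFin J hIJ.symm) σ fun l => ?_)
      exact le_of_not_gt fun hlt => hσ l (r_X_left_eq_zero hΔ hε hr hlt)
  · rw [setLE_iff rfl hIJ.symm] at hn
    refine LinearMap.congr_fun (map_qMinor_eq_zero r.flip (fun a b h => ?_) (fun a b h => ?_) hIJ
      fun σ => ?_) a
    · ext1 c
      rw [LinearMap.flip_apply, hr.2.2.1, h, biform_zero_right, LinearMap.zero_apply,
        LinearMap.zero_apply]
    · ext1 c
      rw [LinearMap.flip_apply, hr.2.2.1, h, biform_zero_left, LinearMap.zero_apply,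
        LinearMap.zero_apply]
    · by_contra! hσ
      refine hn (mono_le_of_perm_le (monotone_orderIsoOfFin J hIJ.symm)
        (monotone_orderIsoOfFin I rfl) σ⁻¹ fun l => le_of_not_gt fun hlt => hσ (σ⁻¹ l) ?_)
      rw [← Equiv.Perm.mul_apply, mul_inv_cancel, Equiv.Perm.one_apply]
      exact r_X_right_eq_zero hΔ hε hr hlt

end
end

section
/- Let i,j ∈ {1,…,n} with i < j and let I,J ⊆ {1,…,n} with |I| = |J|. If i ∈ J, j ∈ I, and I∖{j} = J∖{i}, then r([I|J],X_{ij}) = q̂ (−q)^{−|(i,j)∩I∩J|}, where (i,j) denotes the open integer interval {i+1,…,j−1}; in all other cases r([I|J],X_{ij}) = 0. Moreover, in the nonzero case the exponent satisfies −|(i,j)∩I∩J| = |[1,i)∩J| − |[1,j)∩I|. -/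
/-! For fixed `r`, condition (ii) says that `a ↦ (r(a, X_{ij}))_{ij}` is an algebra homomorphism from
`O_q(M_n(k))` to `n × n` matrices. It kills `X_{ab}` for `a < b`, sends `X_{aa}` to a diagonal
matrix and sends `X_{ab}` with `a > b` to `q - q⁻¹` times the matrix unit at `(b,a)`.

Expanding `[I|J]` along its last column `M = max J` (`QMat.qMinor_expand`) and applying this
homomorphism, only the rows `M` and `j` contribute to the `(i,j)` entry (`QMat.pairing_expand`).
This gives all entries by induction on `|J|` (`QMat.pairing_qMinor`): the image of `[I|J]` is upper
triangular, its diagonal is nonzero only for `I = J`, and above the diagonal, when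
`I ∖ {j} = J ∖ {i}` and `i < M < j`, the two contributions combine through
`-q + (q - q⁻¹) = (-q)⁻¹`, so that each element of `(i,j) ∩ I ∩ J` yields one factor `(-q)⁻¹`. -/

open scoped TensorProduct
open scoped Classical

noncomputable section

open QMat

/-! ### Expansion of a quantum minor along its last column -/

namespace QMat

section Expansion

variable (k : Type*) [Field k] (n : ℕ) (q : k)

/-- The signed sum defining a quantum minor, for rows and columns listed by functions `u` and `v`
on `Fin t` instead of being given as finsets. -/
def tupleMinor {t : ℕ} (u v : Fin t → Fin n) : A k n q :=
  ∑ σ : Equiv.Perm (Fin t),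
    ((-q) ^ inversions σ) • (List.ofFn fun l : Fin t => X k n q (u (σ l)) (v l)).prod

theorem qMinor_eq_tupleMinor {t : ℕ} {I J : Finset (Fin n)} (hI : I.card = t) (hJ : J.card = t)
    {u v : Fin t → Fin n} (hu : StrictMono u) (hv : StrictMono v)
    (huI : ∀ x, u x ∈ I) (hvJ : ∀ x, v x ∈ J) :
    qMinor k n q I J = tupleMinor k n q u v := by
  subst hI
  rw [Finset.orderEmbOfFin_unique rfl huI hu, Finset.orderEmbOfFin_unique hJ hvJ hv]
  rw [qMinor, dif_pos hJ.symm]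
  rfl

/-- The permutation of `Fin (t + 1)` sending the last index to `a` and permuting the remaining
indices, in their order, according to `τ`. -/
def extendPerm {t : ℕ} (a : Fin (t + 1)) (τ : Equiv.Perm (Fin t)) : Equiv.Perm (Fin (t + 1)) :=
  ((finSuccEquiv' (Fin.last t)).trans (Equiv.optionCongr τ)).trans (finSuccEquiv' a).symm

@[simp]
theorem extendPerm_last {t : ℕ} (a : Fin (t + 1)) (τ : Equiv.Perm (Fin t)) :
    extendPerm a τ (Fin.last t) = a := by
  simp [extendPerm]

@[simp]
theorem extendPerm_castSucc {t : ℕ} (a : Fin (t + 1)) (τ : Equiv.Perm (Fin t)) (x : Fin t) :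
    extendPerm a τ x.castSucc = a.succAbove (τ x) := by
  rw [← Fin.succAbove_last]
  simp only [extendPerm, Equiv.trans_apply, finSuccEquiv'_succAbove]
  simp

theorem extendPerm_bijective (t : ℕ) :
    Function.Bijective fun p : Fin (t + 1) × Equiv.Perm (Fin t) => extendPerm p.1 p.2 := by
  rw [Fintype.bijective_iff_injective_and_card]
  constructor
  · rintro ⟨a, τ⟩ ⟨b, ρ⟩ h
    have hab : a = b := by simpa using congrArg (fun σ => σ (Fin.last t)) h
    subst hab
    refine Prod.ext rfl (Equiv.ext fun x => ?_)
    simpa using congrArg (fun σ => σ x.castSucc) h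
  · simp [Fintype.card_perm, Nat.factorial_succ]

theorem inversions_eq_sum {t : ℕ} (σ : Equiv.Perm (Fin t)) :
    inversions σ = ∑ y, ∑ x, if x < y ∧ σ y < σ x then 1 else 0 := by
  rw [inversions, Finset.card_filter, Fintype.sum_prod_type, Finset.sum_comm]

/-- The inversions of `extendPerm a τ` are those of `τ` and those formed with the last index. -/
theorem inversions_extendPerm {t : ℕ} (a : Fin (t + 1)) (τ : Equiv.Perm (Fin t)) :
    inversions (extendPerm a τ) =
      (Finset.univ.filter fun x : Fin t => a < a.succAbove x).card + inversions τ := by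
  have hcard : (Finset.univ.filter fun x : Fin t => a < a.succAbove x).card =
      ∑ x, if a < a.succAbove (τ x) then 1 else 0 := by
    rw [Finset.card_filter]
    exact (Equiv.sum_comp τ fun x => if a < a.succAbove x then 1 else 0).symm
  rw [hcard, inversions_eq_sum, inversions_eq_sum, Fin.sum_univ_castSucc, add_comm]
  congr 1
  · rw [Fin.sum_univ_castSucc]
    simp [Fin.castSucc_lt_last]
  · refine Finset.sum_congr rfl fun y _ => ?_
    rw [Fin.sum_univ_castSucc]
    simp [Fin.succAbove_lt_succAbove_iff, (Fin.castSucc_lt_last y).not_gt]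

theorem tupleMinor_succ {t : ℕ} (u v : Fin (t + 1) → Fin n) :
    tupleMinor k n q u v =
      ∑ a, ((-q) ^ (Finset.univ.filter fun x : Fin t => a < a.succAbove x).card) •
        (tupleMinor k n q (u ∘ a.succAbove) (v ∘ Fin.castSucc) *
          X k n q (u a) (v (Fin.last t))) := by
  rw [tupleMinor, ← (extendPerm_bijective t).sum_comp, Fintype.sum_prod_type]
  refine Finset.sum_congr rfl fun a _ => ?_
  rw [tupleMinor, Finset.sum_mul, Finset.smul_sum]
  refine Finset.sum_congr rfl fun τ _ => ?_
  rw [inversions_extendPerm, List.ofFn_succ', List.concat_eq_append, List.prod_append,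
    pow_add, mul_smul, smul_mul_assoc]
  simp

/-- Laplace expansion of `[I|J]` along the column `M = max J`, which stands last in each product. -/
theorem qMinor_expand {I J : Finset (Fin n)} (hIJ : I.card = J.card) {M : Fin n} (hM : M ∈ J)
    (hmax : ∀ x ∈ J, x ≤ M) :
    qMinor k n q I J =
      ∑ a ∈ I, ((-q) ^ (I.filter fun x => a < x).card) •
        (qMinor k n q (I.erase a) (J.erase M) * X k n q a M) := by
  obtain ⟨t, ht⟩ : ∃ t, J.card = t + 1 :=
    Nat.exists_eq_succ_of_ne_zero (Finset.card_pos.2 ⟨M, hM⟩).ne'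
  have hI := hIJ.trans ht
  set u := I.orderEmbOfFin hI with hu
  set v := J.orderEmbOfFin ht with hv
  have huI : ∀ x, u x ∈ I := I.orderEmbOfFin_mem hI
  have hvJ : ∀ x, v x ∈ J := J.orderEmbOfFin_mem ht
  have hIu : Finset.univ.map u.toEmbedding = I := by
    rw [hu]; exact Finset.map_orderEmbOfFin_univ I hI
  have hvM : v (Fin.last t) = M := by
    refine le_antisymm (hmax _ (hvJ _)) ?_
    have : M ∈ Finset.univ.map v.toEmbedding := by
      rw [hv, Finset.map_orderEmbOfFin_univ J ht]; exact hM
    obtain ⟨x, -, rfl⟩ := Finset.mem_map.1 this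
    exact v.monotone (Fin.le_last x)
  rw [qMinor_eq_tupleMinor k n q hI ht u.strictMono v.strictMono huI hvJ, tupleMinor_succ]
  conv_rhs => rw [← hIu]
  rw [Finset.sum_map]
  rw [hIu]
  refine Finset.sum_congr rfl fun a _ => ?_
  have hcard : (Finset.univ.filter fun x : Fin t => a < a.succAbove x).card =
      (I.filter fun x => u a < x).card := by
    refine Finset.card_bij (fun x _ => u (a.succAbove x)) ?_ ?_ ?_
    · intro x hx
      simpa [huI] using hx
    · intro x _ y _ hxy
      simpa using hxy
    · intro y hy
      obtain ⟨hyI, hay⟩ := Finset.mem_filter.1 hy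
      rw [← hIu] at hyI
      obtain ⟨x, -, rfl⟩ := Finset.mem_map.1 hyI
      have hax : a < x := by simpa using hay
      obtain ⟨z, rfl⟩ := Fin.exists_succAbove_eq hax.ne'
      exact ⟨z, by simpa using hax, rfl⟩
  rw [hcard, hvM]
  congr 2
  symm
  refine qMinor_eq_tupleMinor k n q ?_ ?_ (u.strictMono.comp (Fin.strictMono_succAbove a))
    (v.strictMono.comp Fin.strictMono_castSucc) ?_ ?_
  · exact (Finset.card_erase_of_mem (huI a)).trans (by omega)
  · rw [Finset.card_erase_of_mem hM]; omega
  · intro x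
    exact Finset.mem_erase.2 ⟨by simp [Fin.succAbove_ne], huI _⟩
  · intro x
    refine Finset.mem_erase.2 ⟨?_, hvJ _⟩
    rw [← hvM]
    simp

end Expansion

/-! ### The pairing with a generator -/

section Pairing

variable {k : Type*} [Field k] {n : ℕ} {q : k}
  {Δ : A k n q →ₐ[k] A k n q ⊗[k] A k n q} {ε : A k n q →ₐ[k] k}
  {r : A k n q →ₗ[k] A k n q →ₗ[k] k}

/-- The matrices `(r(a, X_{ij}))_{ij}` multiply: `a ↦ (r(a, X_{ij}))_{ij}` is a representation. -/
theorem pairing_mul (hΔ : IsComul k n q Δ) (hr : IsRForm k n q Δ ε r) (a b : A k n q)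
    (i j : Fin n) :
    r (a * b) (X k n q i j) = ∑ l, r a (X k n q i l) * r b (X k n q l j) := by
  rw [hr.2.1, hΔ]
  simp [biform]

/-- Only two terms of the expansion of `[I|J]` along the column `M = max J` contribute to the
`(i,j)` entry: those of the rows `M` and `j`. Indeed `X_{aM}` acts by a diagonal matrix if `a = M`,
by a multiple of the matrix unit at `(M,a)` if `a > M`, and by zero if `a < M`. -/
theorem pairing_expand (hΔ : IsComul k n q Δ) (hr : IsRForm k n q Δ ε r)
    {I J : Finset (Fin n)} (hIJ : I.card = J.card) {M : Fin n} (hM : M ∈ J)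
    (hmax : ∀ x ∈ J, x ≤ M) (i j : Fin n) :
    r (qMinor k n q I J) (X k n q i j) =
      (if M ∈ I then (-q) ^ (I.filter fun x => M < x).card *
        (r (qMinor k n q (I.erase M) (J.erase M)) (X k n q i j) * if j = M then q else 1) else 0) +
      (if j ∈ I ∧ M < j then (-q) ^ (I.filter fun x => j < x).card *
        (r (qMinor k n q (I.erase j) (J.erase M)) (X k n q i M) * (q - q⁻¹)) else 0) := by
  have hgen : ∀ a l : Fin n, r (X k n q a M) (X k n q l j) =
      (if a = M then (if l = j then (if j = M then q else 1) else 0) else 0) +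
      (if a = j then (if l = M then (if M < j then q - q⁻¹ else 0) else 0) else 0) := by
    intro a l
    rw [hr.2.2.2.2]
    by_cases h1 : a = M <;> by_cases h2 : l = j <;> by_cases h3 : j = M <;> by_cases h4 : a = j <;>
      by_cases h5 : l = M <;> by_cases h6 : M < j <;> simp_all <;> grind
  have hterm : ∀ a, r (qMinor k n q (I.erase a) (J.erase M) * X k n q a M) (X k n q i j) =
      (if a = M then r (qMinor k n q (I.erase M) (J.erase M)) (X k n q i j) *
        (if j = M then q else 1) else 0) +
      (if a = j then (if M < j then r (qMinor k n q (I.erase j) (J.erase M)) (X k n q i M) *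
        (q - q⁻¹) else 0) else 0) := by
    intro a
    rw [pairing_mul hΔ hr]
    simp only [hgen, mul_add, Finset.sum_add_distrib]
    congr 1
    · split_ifs with h <;> simp [h]
    · split_ifs with h <;> simp [h]
  rw [qMinor_expand k n q hIJ hM hmax]
  simp only [map_sum, map_smul, LinearMap.sum_apply, LinearMap.smul_apply, hterm, smul_eq_mul,
    mul_add, Finset.sum_add_distrib, mul_ite, mul_zero, Finset.sum_ite_eq']
  congr 1
  by_cases h1 : j ∈ I <;> simp [h1]

/-- The index condition under which `r([I|J], X_{ij})` with `i < j` is nonzero. -/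
def Linked (I J : Finset (Fin n)) (i j : Fin n) : Prop :=
  i ∈ J ∧ j ∈ I ∧ I.erase j = J.erase i

/-- The set `(i,j) ∩ I ∩ J`. -/
def between (I J : Finset (Fin n)) (i j : Fin n) : Finset (Fin n) :=
  (I ∩ J).filter fun x => i < x ∧ x < j

/-- The condition inherited by the complementary minor of the row `M` and column `M`. -/
theorem linked_erase_iff {I J : Finset (Fin n)} {i j M : Fin n} (hij : i ≠ j) (hMI : M ∈ I)
    (hMJ : M ∈ J) : Linked (I.erase M) (J.erase M) i j ↔ Linked I J i j := by
  simp only [Linked, Finset.ext_iff, Finset.mem_erase]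
  constructor
  · rintro ⟨h1, h2, h3⟩
    refine ⟨h1.2, h2.2, fun x => ?_⟩
    have := h3 x
    grind
  · rintro ⟨h1, h2, h3⟩
    have := h3 M
    have := h3 i
    have := h3 j
    refine ⟨by grind, by grind, fun x => ?_⟩
    have := h3 x
    grind

/-- The condition inherited by the complementary minor of the row `j` and column `M`, for the
`(i,M)` entry. -/
theorem linked_erase_row_iff {I J : Finset (Fin n)} {i j M : Fin n} (hiM : i ≠ M)
    (hjI : j ∈ I) (hMJ : M ∈ J) : Linked (I.erase j) (J.erase M) i M ↔ Linked I J i j := by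
  simp only [Linked, Finset.ext_iff, Finset.mem_erase]
  constructor
  · rintro ⟨h1, h2, h3⟩
    refine ⟨h1.2, hjI, fun x => ?_⟩
    have := h3 x
    grind
  · rintro ⟨h1, h2, h3⟩
    have := h3 M
    refine ⟨by grind, by grind, fun x => ?_⟩
    have := h3 x
    grind

theorem between_erase {I J : Finset (Fin n)} {i j M : Fin n} :
    between (I.erase M) (J.erase M) i j = (between I J i j).erase M := by
  ext x
  simp only [between, Finset.mem_filter, Finset.mem_inter, Finset.mem_erase]
  tauto

theorem between_erase_row {I J : Finset (Fin n)} {i j M : Fin n} (hMj : M < j)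
    (hmax : ∀ x ∈ J, x ≤ M) :
    between (I.erase j) (J.erase M) i M = (between I J i j).erase M := by
  ext x
  have := hmax x
  simp only [between, Finset.mem_filter, Finset.mem_inter, Finset.mem_erase]
  grind

/-- All entries of the matrix by which `[I|J]` acts. The lower triangular and diagonal entries are
needed for the induction on `|J|`. -/
theorem pairing_qMinor (hq : q ≠ 0) (hΔ : IsComul k n q Δ) (hε : IsCounit k n q ε)
    (hr : IsRForm k n q Δ ε r) (t : ℕ) :
    ∀ I J : Finset (Fin n), I.card = t → J.card = t → ∀ i j : Fin n,
      (j < i → r (qMinor k n q I J) (X k n q i j) = 0) ∧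
      (i = j → r (qMinor k n q I J) (X k n q i j) =
        if I = J then (if i ∈ I then q else 1) else 0) ∧
      (i < j → r (qMinor k n q I J) (X k n q i j) =
        if Linked I J i j then (q - q⁻¹) * (-q) ^ (-((between I J i j).card : ℤ)) else 0) := by
  induction t with
  | zero =>
    intro I J hI hJ i j
    obtain rfl := Finset.card_eq_zero.1 hI
    obtain rfl := Finset.card_eq_zero.1 hJ
    have h1 : qMinor k n q (∅ : Finset (Fin n)) ∅ = 1 := by
      rw [qMinor_eq_tupleMinor k n q (t := 0) (u := Fin.elim0) (v := Fin.elim0) rfl rfl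
        (fun x => x.elim0) (fun x => x.elim0) (fun x => x.elim0) (fun x => x.elim0)]
      simp [tupleMinor, inversions]
    rw [h1, (hr.2.2.2.1 _).2, hε]
    refine ⟨fun h => if_neg h.ne', fun h => by simp [h], fun h => ?_⟩
    simp [h.ne, Linked]
  | succ t ih =>
    intro I J hI hJ i j
    have hne : J.Nonempty := Finset.card_pos.1 (by omega)
    obtain ⟨M, hM, hmax⟩ : ∃ M ∈ J, ∀ x ∈ J, x ≤ M :=
      ⟨J.max' hne, J.max'_mem hne, fun x hx => J.le_max' x hx⟩
    have hJM : (J.erase M).card = t := by rw [Finset.card_erase_of_mem hM]; omega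
    have hIe : ∀ a ∈ I, (I.erase a).card = t := fun a ha => by
      rw [Finset.card_erase_of_mem ha]; omega
    rw [pairing_expand hΔ hr (hI.trans hJ.symm) hM hmax]
    refine ⟨fun hji => ?_, fun hij => ?_, fun hij => ?_⟩
    · by_cases h1 : M ∈ I <;> by_cases h2 : j ∈ I ∧ M < j
      · simp [h1, h2, (ih _ _ (hIe _ h1) hJM i j).1 hji,
          (ih _ _ (hIe _ h2.1) hJM i M).1 (h2.2.trans hji)]
      · simp [h1, h2, (ih _ _ (hIe _ h1) hJM i j).1 hji]
      · simp [h1, h2, (ih _ _ (hIe _ h2.1) hJM i M).1 (h2.2.trans hji)]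
      · simp [h1, h2]
    · subst hij
      have hsnd : (if i ∈ I ∧ M < i then (-q) ^ (I.filter fun x => i < x).card *
          (r (qMinor k n q (I.erase i) (J.erase M)) (X k n q i M) * (q - q⁻¹)) else 0) = 0 := by
        split_ifs with h
        · rw [(ih _ _ (hIe _ h.1) hJM i M).1 h.2]; simp
        · rfl
      rw [hsnd, add_zero]
      by_cases h1 : M ∈ I
      · rw [if_pos h1, (ih _ _ (hIe _ h1) hJM i i).2.1 rfl]
        by_cases hIJ : I = J
        · subst hIJ
          have : (I.filter fun x => M < x) = ∅ :=
            Finset.filter_eq_empty_iff.2 fun x hx => (hmax x hx).not_gt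
          by_cases h3 : i = M
          · subst h3; simp [this, h1]
          · simp [this, h3]
        · have : I.erase M ≠ J.erase M := fun h => hIJ (by
            rw [← Finset.insert_erase h1, h, Finset.insert_erase hM])
          simp [this, hIJ]
      · have : I ≠ J := fun h => h1 (h ▸ hM)
        simp [this, h1]
    · by_cases hL : Linked I J i j
      · rw [if_pos hL]
        obtain ⟨hiJ, hjI, hE⟩ := id hL
        have hmem : ∀ x, (x ≠ j ∧ x ∈ I ↔ x ≠ i ∧ x ∈ J) := fun x => by
          simpa using Finset.ext_iff.1 hE x
        have hjJ : j ∉ J := fun h => ((hmem j).2 ⟨hij.ne', h⟩).1 rfl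
        have hiI : i ∉ I := fun h => ((hmem i).1 ⟨hij.ne, h⟩).1 rfl
        have hjM : j ≠ M := fun h => hjJ (h ▸ hM)
        have hle : ∀ x ∈ I, x = j ∨ x ≤ M := fun x hx =>
          or_iff_not_imp_left.2 fun hxj => hmax x ((hmem x).1 ⟨hxj, hx⟩).2
        rcases hjM.symm.lt_or_gt with hMj | hMj
        · have hc : (I.filter fun x => j < x) = ∅ :=
            Finset.filter_eq_empty_iff.2 fun x hx hlt => by
              rcases hle x hx with h | h <;> order
          rcases (hmax i hiJ).eq_or_lt with hiM | hiM
          · subst hiM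
            have hb : between I J i j = ∅ :=
              Finset.filter_eq_empty_iff.2 fun x hx hlt =>
                (hmax x (Finset.mem_inter.1 hx).2).not_gt hlt.1
            rw [if_neg hiI, if_pos (And.intro hjI hMj), hc, (ih _ _ (hIe _ hjI) hJM i i).2.1 rfl,
              if_pos hE, if_neg (fun h => hiI (Finset.mem_of_mem_erase h)), hb]
            simp
          · have hMI : M ∈ I := ((hmem M).2 ⟨hiM.ne', hM⟩).2
            have hd : (I.filter fun x => M < x) = {j} := by
              ext x
              simp only [Finset.mem_filter, Finset.mem_singleton]
              exact ⟨fun h => (hle x h.1).resolve_right h.2.not_ge, fun h => h ▸ ⟨hjI, hMj⟩⟩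
            have hMb : M ∈ between I J i j := by simp [between, hMI, hM, hiM, hMj]
            have hcard := Finset.card_erase_add_one hMb
            rw [if_pos hMI, if_pos (And.intro hjI hMj), hc, hd, if_neg hjM,
              (ih _ _ (hIe _ hMI) hJM i j).2.2 hij, (ih _ _ (hIe _ hjI) hJM i M).2.2 hiM,
              if_pos ((linked_erase_iff hij.ne hMI hM).2 hL),
              if_pos ((linked_erase_row_iff hiM.ne hjI hM).2 hL), between_erase,
              between_erase_row hMj hmax, ← hcard]
            -- The two contributions add up by `-q + (q - q⁻¹) = (-q)⁻¹`.
            rw [Nat.cast_add, neg_add, zpow_add₀ (neg_ne_zero.2 hq)]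
            simp only [Finset.card_singleton, Finset.card_empty, pow_one, pow_zero, Nat.cast_one,
              zpow_neg_one, inv_neg]
            ring
        · have hMI : M ∈ I := ((hmem M).2 ⟨(hij.trans hMj).ne', hM⟩).2
          have hd : (I.filter fun x => M < x) = ∅ :=
            Finset.filter_eq_empty_iff.2 fun x hx hlt => by
              rcases hle x hx with h | h <;> order
          have hMb : M ∉ between I J i j := fun h => (Finset.mem_filter.1 h).2.2.not_gt hMj
          rw [if_pos hMI, if_neg hjM, if_neg (fun h => h.2.not_gt hMj), hd,
            (ih _ _ (hIe _ hMI) hJM i j).2.2 hij, if_pos ((linked_erase_iff hij.ne hMI hM).2 hL),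
            between_erase, Finset.erase_eq_of_notMem hMb]
          simp
      · rw [if_neg hL]
        have hfst : M ∈ I → r (qMinor k n q (I.erase M) (J.erase M)) (X k n q i j) = 0 := by
          intro hMI
          rw [(ih _ _ (hIe _ hMI) hJM i j).2.2 hij]
          exact if_neg fun h => hL ((linked_erase_iff hij.ne hMI hM).1 h)
        have hsnd : j ∈ I ∧ M < j →
            r (qMinor k n q (I.erase j) (J.erase M)) (X k n q i M) = 0 := by
          rintro ⟨hjI, hMj⟩
          rcases lt_trichotomy i M with hiM | hiM | hiM
          · rw [(ih _ _ (hIe _ hjI) hJM i M).2.2 hiM]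
            exact if_neg fun h => hL ((linked_erase_row_iff hiM.ne hjI hM).1 h)
          · rw [(ih _ _ (hIe _ hjI) hJM i M).2.1 hiM]
            exact if_neg fun h => hL ⟨hiM ▸ hM, hjI, by rw [h, hiM]⟩
          · exact (ih _ _ (hIe _ hjI) hJM i M).1 hiM
        by_cases h1 : M ∈ I <;> by_cases h2 : j ∈ I ∧ M < j
        · simp [h1, h2, hfst h1, hsnd h2]
        · simp [h1, h2, hfst h1]
        · simp [h1, h2, hsnd h2]
        · simp [h1, h2]

end Pairing

/-- The two expressions for the exponent agree: the elements of `I` below `j` are those of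
`J` below `i` together with `(i,j) ∩ I ∩ J`. -/
theorem neg_card_between {n : ℕ} {i j : Fin n} (hij : i < j) {I J : Finset (Fin n)}
    (h : Linked I J i j) :
    -((between I J i j).card : ℤ) =
      ((J.filter fun x => x < i).card : ℤ) - ((I.filter fun x => x < j).card : ℤ) := by
  obtain ⟨hiJ, hjI, hE⟩ := h
  have hmem : ∀ x, (x ≠ j ∧ x ∈ I ↔ x ≠ i ∧ x ∈ J) := fun x => by
    simpa using Finset.ext_iff.1 hE x
  have hU : (I.filter fun x => x < j) = (J.filter fun x => x < i) ∪ between I J i j := by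
    ext x
    simp only [between, Finset.mem_filter, Finset.mem_inter, Finset.mem_union]
    grind
  have hD : Disjoint (J.filter fun x => x < i) (between I J i j) := by
    rw [Finset.disjoint_left]
    intro x
    simp only [between, Finset.mem_filter]
    grind
  rw [hU, Finset.card_union_of_disjoint hD]
  push_cast
  ring

end QMat

/-- Value of `r([I|J], X_{ij})` for `i < j`. -/
theorem stmt5 (k : Type*) [Field k] (n : ℕ) (hn : 0 < n) (q : k) (hq : q ≠ 0)
    (Δ : A k n q →ₐ[k] A k n q ⊗[k] A k n q) (ε : A k n q →ₐ[k] k)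
    (hΔ : IsComul k n q Δ) (hε : IsCounit k n q ε)
    (r : A k n q →ₗ[k] A k n q →ₗ[k] k) (hr : IsRForm k n q Δ ε r)
    (i j : Fin n) (hij : i < j) (I J : Finset (Fin n)) (hIJ : I.card = J.card) :
    ((i ∈ J ∧ j ∈ I ∧ I.erase j = J.erase i) →
      r (qMinor k n q I J) (X k n q i j) =
          (q - q⁻¹) * (-q) ^ (-((((I ∩ J).filter fun x => i < x ∧ x < j).card : ℤ))) ∧
        -((((I ∩ J).filter fun x => i < x ∧ x < j).card : ℤ)) =
          ((J.filter fun x => x < i).card : ℤ) - ((I.filter fun x => x < j).card : ℤ)) ∧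
    (¬ (i ∈ J ∧ j ∈ I ∧ I.erase j = J.erase i) →
      r (qMinor k n q I J) (X k n q i j) = 0) := by
  obtain ⟨-, -, h⟩ := pairing_qMinor hq hΔ hε hr J.card I J hIJ rfl i j
  refine ⟨fun hL => ⟨?_, neg_card_between hij hL⟩, fun hL => ?_⟩
  · rw [h hij]
    exact if_pos hL
  · rw [h hij]
    exact if_neg hL

end
end
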